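/- arXiv:0709.2334 — 5 statements merged into one kernel-verified Lean document; each statement's English description precedes it below -/
import Mathlib

section
/- Let k be a field and let H be a finite-dimensional Hopf algebra over k. Then H is a Frobenius algebra; that is, there exists a bilinear form φ : H × H → k which is non-degenerate (φ(x,H) ≠ 0 and φ(H,x) ≠ 0 for every nonzero x ∈ H) and associative (φ(xh, y) = φ(x, hy) for all x, y, h ∈ H). -/
/-!
STATEMENT 0 (Larson–Sweedler):
Every finite-dimensional Hopf algebra `H` over a field `k` is a Frobenius algebra,
i.e. it admits a bilinear form `φ : H × H → k` which is non-degenerate and associative.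
-/

universe u v

/-!
Write `c ↼ f = ∑ f(c₁) c₂`. For every `v`, the functional `f ↦ tr (a ↦ S²(a ↼ f) v)` on the dual
of `H` is evaluation at a left integral of `H`: multiplying `f` by `h` conjugates the operator by
`h₁` and `S(h₂)`, which collapses to `ε(h)` under the trace. Choosing the pairs `(f, v)` to
represent the antipode makes these operators add up to `a ↦ ε(a) 1`, of trace `1`, so over a local
ring some functional takes a unit value at some left integral `t`.

The elements `t ↼ f` form a left ideal, because `t ↼ f(S(h) ·) = h (t ↼ f)`, and this ideal contains
`∑ f(t₁) S(t₂) t₃ = f(t) 1`. Hence `f ↦ t ↼ f` is bijective, and if `t ↼ l = 1` then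
`h ↦ l(S(h) ·)` inverts it, so that the form `l(x y)` is perfect.
-/

namespace LarsonSweedler

open Coalgebra HopfAlgebra LinearMap Module

section Coalgebra

variable {R C M : Type*} [CommSemiring R] [AddCommMonoid C] [Module R C] [Coalgebra R C]
  [AddCommMonoid M] [Module R M]

/-- The right action `c ↼ f = ∑ f(c₁) c₂` of the dual of a coalgebra, as a bilinear map taking the
functional `f` first. -/
noncomputable def rightHit : Dual R C →ₗ[R] C →ₗ[R] C :=
  ((rTensorHom C).compr₂ (TensorProduct.lid R C).toLinearMap).compl₂ comul

lemma rightHit_eq_sum (f : Dual R C) {c : C} {ι : Type*} (r : Repr R c ι) :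
    rightHit f c = ∑ i ∈ r.index, f (r.left i) • r.right i := by
  simp [rightHit, ← r.eq]

lemma sum_counit_smul_left {c : C} {ι : Type*} (r : Repr R c ι) :
    ∑ i ∈ r.index, counit (R := R) (r.right i) • r.left i = c := by
  simpa only [map_sum, TensorProduct.rid_tmul, one_smul]
    using congr(TensorProduct.rid R C $(sum_tmul_counit_eq (R := R) r))

lemma counit_rightHit (f : Dual R C) (c : C) : counit (R := R) (rightHit f c) = f c := by
  conv_rhs => rw [← sum_counit_smul_left (ℛ R c)]
  simp only [rightHit_eq_sum f (ℛ R c), map_sum, map_smul, smul_eq_mul, mul_comm]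

lemma rightHit_rightHit (f g : Dual R C) (c : C) :
    rightHit g (rightHit f c) = rightHit (g ∘ₗ rightHit f) c := by
  have coassoc := congr(TensorProduct.lid R C
    (TensorProduct.map f ((TensorProduct.lid R C).toLinearMap ∘ₗ g.rTensor C)
      $(sum_tmul_tmul_eq (ℛ R c) (fun i ↦ ℛ R _) (fun i ↦ ℛ R _))))
  simp only [map_sum, TensorProduct.map_tmul, comp_apply, LinearEquiv.coe_coe, rTensor_tmul,
    TensorProduct.lid_tmul] at coassoc
  calc rightHit g (rightHit f c)
      = ∑ i ∈ (ℛ R c).index, f ((ℛ R c).left i) • rightHit g ((ℛ R c).right i) := by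
        rw [rightHit_eq_sum f (ℛ R c), map_sum]
        simp only [map_smul]
    _ = ∑ i ∈ (ℛ R c).index, (g ∘ₗ rightHit f) ((ℛ R c).left i) • (ℛ R c).right i := by
        simp only [rightHit_eq_sum _ (ℛ R ((ℛ R c).right _)), comp_apply,
          rightHit_eq_sum _ (ℛ R ((ℛ R c).left _)), map_sum, map_smul, Finset.smul_sum,
          Finset.sum_smul, smul_assoc]
        exact coassoc.symm
    _ = rightHit (g ∘ₗ rightHit f) c := (rightHit_eq_sum _ _).symm

lemma sum_basis_rightHit {N ι κ : Type*} [AddCommMonoid N] [Module R N] [Fintype ι]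
    (b : Basis ι R N) (T : C →ₗ[R] N) (B : N →ₗ[R] C →ₗ[R] M) {c : C} (r : Repr R c κ) :
    ∑ j, B (b j) (rightHit (b.coord j ∘ₗ T) c) = ∑ i ∈ r.index, B (T (r.left i)) (r.right i) := by
  have expand (n : N) (x : C) : ∑ j, b.coord j n • B (b j) x = B n x := by
    conv_rhs => rw [← b.sum_repr n]
    simp only [map_sum, map_smul, LinearMap.sum_apply, LinearMap.smul_apply, Basis.coord_apply]
  simp only [rightHit_eq_sum _ r, map_sum, map_smul, comp_apply]
  rw [Finset.sum_comm]
  simp only [expand]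

end Coalgebra

section HopfAlgebra

variable {R H M : Type*} [CommSemiring R] [Semiring H] [AddCommMonoid M] [Module R M]

lemma rightHit_mul [Bialgebra R H] (f : Dual R H) {x : H} {ι : Type*} (r : Repr R x ι) (y : H) :
    rightHit f (x * y) = ∑ i ∈ r.index, r.right i * rightHit (f ∘ₗ mulLeft R (r.left i)) y := by
  simp [rightHit_eq_sum _ (r.mul (ℛ R y)), rightHit_eq_sum _ (ℛ R y), Finset.sum_product,
    Finset.mul_sum]

/-- A left integral in a bialgebra: an element on which left multiplication acts through the
counit. -/
def IsLeftIntegral (R : Type*) {H : Type*} [CommSemiring R] [Semiring H] [Bialgebra R H]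
    (t : H) : Prop :=
  ∀ h : H, h * t = counit (R := R) h • t

/-- The linear map `x ↦ a ↼ f(x ·)`. -/
noncomputable def translateHit [Bialgebra R H] (f : Dual R H) (a : H) : H →ₗ[R] H :=
  rightHit.flip a ∘ₗ (LinearMap.mul R H).compr₂ f

lemma translateHit_apply [Bialgebra R H] (f : Dual R H) (a x : H) :
    translateHit f a x = rightHit (f ∘ₗ mulLeft R x) a :=
  rfl

lemma translateHit_one [Bialgebra R H] (f : Dual R H) (a : H) :
    translateHit f a 1 = rightHit f a := by
  rw [translateHit_apply, mulLeft_one, comp_id]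

variable [HopfAlgebra R H]

lemma sum_antipode_mul_apply (B : H →ₗ[R] H →ₗ[R] M) (h : H) :
    ∑ i ∈ (ℛ R h).index, ∑ j ∈ (ℛ R ((ℛ R h).right i)).index,
      B (antipode R ((ℛ R h).left i) * (ℛ R ((ℛ R h).right i)).left j)
        ((ℛ R ((ℛ R h).right i)).right j) = B 1 h := by
  have coassoc := congr(TensorProduct.lift B
    ((LinearMap.mul' R H ∘ₗ (antipode R).rTensor H).rTensor H
      ((TensorProduct.assoc R H H H).symm
        $(sum_tmul_tmul_eq (ℛ R h) (fun i ↦ ℛ R _) (fun i ↦ ℛ R _)))))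
  simp only [map_sum, TensorProduct.assoc_symm_tmul, rTensor_tmul, comp_apply,
    LinearMap.mul'_apply, TensorProduct.lift.tmul] at coassoc
  rw [← coassoc]
  simp only [← map_sum, ← LinearMap.sum_apply, sum_antipode_mul_eq_smul]
  simp only [map_smul, LinearMap.smul_apply]
  simp only [← map_smul, ← map_sum, sum_counit_smul]

lemma sum_apply_antipode_mul (B : H →ₗ[R] H →ₗ[R] M) (h : H) :
    ∑ i ∈ (ℛ R h).index, ∑ j ∈ (ℛ R ((ℛ R h).left i)).index,
      B ((ℛ R ((ℛ R h).left i)).left j)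
        (antipode R ((ℛ R ((ℛ R h).left i)).right j) * (ℛ R h).right i) = B h 1 := by
  have coassoc := congr(TensorProduct.lift B
    ((LinearMap.mul' R H ∘ₗ (antipode R).rTensor H).lTensor H
      $(sum_tmul_tmul_eq (ℛ R h) (fun i ↦ ℛ R _) (fun i ↦ ℛ R _))))
  simp only [map_sum, lTensor_tmul, rTensor_tmul, comp_apply,
    LinearMap.mul'_apply, TensorProduct.lift.tmul] at coassoc
  rw [coassoc]
  have counit_left := congr(B $(sum_counit_smul_left (R := R) (ℛ R h)) 1)
  simp only [← map_sum, sum_antipode_mul_eq_smul]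
  simpa only [map_sum, map_smul, LinearMap.sum_apply, LinearMap.smul_apply] using counit_left

namespace IsLeftIntegral

variable {t : H}

lemma sum_mul_translateHit (ht : IsLeftIntegral R t) (f : Dual R H) (x y : H) :
    ∑ j ∈ (ℛ R y).index, (ℛ R y).right j * translateHit f t (x * (ℛ R y).left j) =
      counit (R := R) y • translateHit f t x := by
  have expand := rightHit_mul (f ∘ₗ mulLeft R x) (ℛ R y) t
  rw [ht, map_smul] at expand
  simpa only [translateHit_apply, comp_assoc, ← mulLeft_mul] using expand.symm

lemma rightHit_comp_mulLeft_antipode (ht : IsLeftIntegral R t) (f : Dual R H) (h : H) :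
    rightHit (f ∘ₗ mulLeft R (antipode R h)) t = h * rightHit f t := by
  calc translateHit f t (antipode R h)
      = ∑ i ∈ (ℛ R h).index,
          counit (R := R) ((ℛ R h).right i) • translateHit f t (antipode R ((ℛ R h).left i)) := by
        simp only [← map_smul, ← map_sum, sum_counit_smul_left]
    _ = h * translateHit f t 1 := by
        simp only [← ht.sum_mul_translateHit]
        exact sum_antipode_mul_apply ((LinearMap.mul R H).flip ∘ₗ translateHit f t) h
    _ = h * rightHit f t := by rw [translateHit_one]

lemma exists_rightHit_eq_smul_one [Module.Free R H] [Module.Finite R H]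
    (ht : IsLeftIntegral R t) (f : Dual R H) :
    ∃ l : Dual R H, rightHit l t = f t • (1 : H) := by
  let b := Free.chooseBasis R H
  let u := rightHit f t
  let g (j) : Dual R H := (b.coord j ∘ₗ antipode R) ∘ₗ rightHit f
  refine ⟨∑ j, g j ∘ₗ mulLeft R (antipode R (b j)), ?_⟩
  calc rightHit (∑ j, g j ∘ₗ mulLeft R (antipode R (b j))) t
      = ∑ j, b j * rightHit (b.coord j ∘ₗ antipode R) u := by
        simp only [map_sum, LinearMap.sum_apply, ht.rightHit_comp_mulLeft_antipode, u, g,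
          rightHit_rightHit]
    _ = ∑ i ∈ (ℛ R u).index, antipode R ((ℛ R u).left i) * (ℛ R u).right i :=
        sum_basis_rightHit b (antipode R) (LinearMap.mul R H) (ℛ R u)
    _ = f t • 1 := by rw [sum_antipode_mul_eq_smul, counit_rightHit]

lemma exists_rightHit_eq_one [Module.Free R H] [Module.Finite R H] (ht : IsLeftIntegral R t)
    {f : Dual R H} (hf : IsUnit (f t)) : ∃ l : Dual R H, rightHit l t = 1 := by
  obtain ⟨c, hc⟩ := hf.exists_left_inv
  obtain ⟨l, hl⟩ := ht.exists_rightHit_eq_smul_one f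
  exact ⟨c • l, by rw [map_smul, LinearMap.smul_apply, hl, smul_smul, hc, one_smul]⟩

lemma rightHit_surjective (ht : IsLeftIntegral R t) {l : Dual R H} (hl : rightHit l t = 1) :
    Function.Surjective (rightHit.flip t : Dual R H →ₗ[R] H) := fun h ↦
  ⟨l ∘ₗ mulLeft R (antipode R h), by
    rw [flip_apply, ht.rightHit_comp_mulLeft_antipode, hl, mul_one]⟩

end IsLeftIntegral

end HopfAlgebra

section Integral

variable {R H : Type*} [CommRing R] [Ring H] [HopfAlgebra R H]

/-- The operator `a ↦ S²(a ↼ f) v`, linear in `f`. Its trace, as a functional of `f`, is given by a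
left integral. -/
noncomputable def integralOperator (v : H) : Dual R H →ₗ[R] End R H :=
  (mulRight R v ∘ₗ antipode R ∘ₗ antipode R).compRight R ∘ₗ rightHit

lemma integralOperator_apply (v a : H) (f : Dual R H) :
    integralOperator v f a = antipode R (antipode R (rightHit f a)) * v :=
  rfl

lemma integralOperator_comp_mulLeft (v : H) (f : Dual R H) (h : H) :
    integralOperator v (f ∘ₗ mulLeft R h) = ∑ i ∈ (ℛ R h).index,
      mulLeft R (antipode R ((ℛ R h).right i)) *
        (integralOperator v f * mulLeft R ((ℛ R h).left i)) := by
  ext a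
  let B : H →ₗ[R] H →ₗ[R] H := (LinearMap.mul R H).flip.compl₁₂
    (mulRight R v ∘ₗ antipode R ∘ₗ antipode R ∘ₗ translateHit f a) (antipode R)
  calc integralOperator v (f ∘ₗ mulLeft R h) a
      = B h 1 := by
        simp [B, integralOperator_apply, translateHit_apply]
    _ = _ := by
        rw [← sum_apply_antipode_mul, LinearMap.sum_apply]
        refine Finset.sum_congr rfl fun i _ ↦ ?_
        simp [B, integralOperator_apply, rightHit_mul f (ℛ R ((ℛ R h).left i)) a,
          antipode_mul_antidistrib, translateHit_apply, Finset.sum_mul, mul_assoc]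

lemma trace_integralOperator_comp_mulLeft (v : H) (f : Dual R H) (h : H) :
    trace R H (integralOperator v (f ∘ₗ mulLeft R h)) =
      counit (R := R) h * trace R H (integralOperator v f) := by
  have combine (i) : mulLeft R ((ℛ R h).left i) * mulLeft R (antipode R ((ℛ R h).right i)) =
      mulLeft R ((ℛ R h).left i * antipode R ((ℛ R h).right i)) := (mulLeft_mul R H _ _).symm
  have collapse : ∑ i ∈ (ℛ R h).index,
      mulLeft R ((ℛ R h).left i * antipode R ((ℛ R h).right i)) = counit (R := R) h • 1 := by
    ext x
    simp only [LinearMap.sum_apply, mulLeft_apply, ← Finset.sum_mul, sum_mul_antipode_eq_smul,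
      LinearMap.smul_apply, End.one_apply, smul_mul_assoc, one_mul]
  calc trace R H (integralOperator v (f ∘ₗ mulLeft R h))
      = ∑ i ∈ (ℛ R h).index, trace R H
          (mulLeft R ((ℛ R h).left i * antipode R ((ℛ R h).right i)) * integralOperator v f) := by
        rw [integralOperator_comp_mulLeft, map_sum]
        refine Finset.sum_congr rfl fun i _ ↦ ?_
        rw [← mul_assoc, trace_mul_comm, ← mul_assoc, combine]
    _ = counit (R := R) h * trace R H (integralOperator v f) := by
        rw [← map_sum, ← Finset.sum_mul, collapse, smul_mul_assoc, one_mul, map_smul, smul_eq_mul]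

variable [Module.Free R H] [Module.Finite R H]

/-- The left integral at which each functional `f` takes the value `tr (a ↦ S²(a ↼ f) v)`; it exists
because a finite free module is reflexive. -/
noncomputable def traceIntegral (v : H) : H :=
  (evalEquiv R H).symm (trace R H ∘ₗ integralOperator v)

lemma apply_traceIntegral (v : H) (f : Dual R H) :
    f (traceIntegral (R := R) v) = trace R H (integralOperator v f) :=
  apply_evalEquiv_symm_apply R H f _

lemma isLeftIntegral_traceIntegral (v : H) : IsLeftIntegral R (traceIntegral (R := R) v) := by
  intro h
  refine eval_apply_injective R (LinearMap.ext fun f ↦ ?_)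
  calc (f ∘ₗ mulLeft R h) (traceIntegral (R := R) v)
      = counit (R := R) h * trace R H (integralOperator v f) := by
        rw [apply_traceIntegral, trace_integralOperator_comp_mulLeft]
    _ = f (counit (R := R) h • traceIntegral (R := R) v) := by
        rw [map_smul, apply_traceIntegral, smul_eq_mul]

lemma sum_basis_apply_traceIntegral {ι : Type*} [Fintype ι] (b : Basis ι R H) :
    ∑ j, b.coord j (antipode R (traceIntegral (R := R) (b j))) = 1 := by
  have rank_one : ∑ j, integralOperator (b j) (b.coord j ∘ₗ antipode R) =
      (counit (R := R)).smulRight (1 : H) := by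
    ext a
    calc (∑ j, integralOperator (b j) (b.coord j ∘ₗ antipode R)) a
        = ∑ i ∈ (ℛ R a).index,
            antipode R (antipode R ((ℛ R a).right i)) * antipode R ((ℛ R a).left i) := by
          rw [LinearMap.sum_apply]
          exact sum_basis_rightHit b (antipode R)
            ((LinearMap.mul R H).flip.compl₂ (antipode R ∘ₗ antipode R)) (ℛ R a)
      _ = counit (R := R) a • (1 : H) := by
          simp only [← antipode_mul_antidistrib, ← map_sum, sum_mul_antipode_eq_smul, map_smul,
            antipode_one]
  calc ∑ j, b.coord j (antipode R (traceIntegral (R := R) (b j)))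
      = trace R H (∑ j, integralOperator (b j) (b.coord j ∘ₗ antipode R)) := by
        simp only [map_sum, ← apply_traceIntegral, comp_apply]
    _ = 1 := by rw [rank_one, trace_smulRight, Bialgebra.counit_one]

lemma exists_isLeftIntegral_isUnit [IsLocalRing R] :
    ∃ t : H, IsLeftIntegral R t ∧ ∃ f : Dual R H, IsUnit (f t) := by
  let b := Free.chooseBasis R H
  obtain ⟨j, -, hj⟩ := IsLocalRing.exists_of_isUnit_sum
    ((sum_basis_apply_traceIntegral b).symm ▸ isUnit_one)
  exact ⟨traceIntegral (R := R) (b j), isLeftIntegral_traceIntegral _, b.coord j ∘ₗ antipode R, hj⟩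

lemma bijective_of_surjective_dual {P : Type*} [AddCommGroup P] [Module R P] [Module.Free R P]
    [Module.Finite R P] {T : Dual R P →ₗ[R] P} (hT : Function.Surjective T) :
    Function.Bijective T :=
  OrzechProperty.bijective_of_surjective_of_finrank_le T hT
    (Free.chooseBasis R P).toDualEquiv.finrank_eq.ge

lemma IsLeftIntegral.isPerfPair {t : H} (ht : IsLeftIntegral R t) {l : Dual R H}
    (hl : rightHit l t = 1) : ((LinearMap.mul R H).compr₂ l).IsPerfPair := by
  have hit_injective : Function.Injective (rightHit.flip t : Dual R H →ₗ[R] H) :=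
    (bijective_of_surjective_dual (ht.rightHit_surjective hl)).injective
  have surjective : Function.Surjective ((LinearMap.mul R H).compr₂ l) := fun g ↦ by
    refine ⟨antipode R (rightHit g t), hit_injective ?_⟩
    calc rightHit (l ∘ₗ mulLeft R (antipode R (rightHit g t))) t
        = rightHit g t * rightHit l t := ht.rightHit_comp_mulLeft_antipode l _
      _ = rightHit g t := by rw [hl, mul_one]
  exact .of_bijective _ (OrzechProperty.bijective_of_surjective_of_finrank_le _ surjective
    (Free.chooseBasis R H).toDualEquiv.finrank_eq.le)

end Integral

end LarsonSweedler

theorem finite_dimensional_hopf_algebra_is_frobenius_general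
    (R : Type*) [CommRing R] [IsLocalRing R] (H : Type*) [Ring H] [HopfAlgebra R H]
    [Module.Free R H] [Module.Finite R H] :
    ∃ φ : H →ₗ[R] H →ₗ[R] R, φ.IsPerfPair ∧ ∀ x h y : H, φ (x * h) y = φ x (h * y) := by
  obtain ⟨t, ht, f, hf⟩ := LarsonSweedler.exists_isLeftIntegral_isUnit (R := R) (H := H)
  obtain ⟨l, hl⟩ := ht.exists_rightHit_eq_one hf
  exact ⟨(LinearMap.mul R H).compr₂ l, ht.isPerfPair hl, fun x h y ↦ by simp [mul_assoc]⟩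

theorem finite_dimensional_hopf_algebra_is_frobenius
    (k : Type u) [Field k] (H : Type v) [Ring H] [HopfAlgebra k H]
    [FiniteDimensional k H] :
    ∃ φ : H →ₗ[k] H →ₗ[k] k,
      (∀ x : H, x ≠ 0 → ∃ y : H, φ x y ≠ 0) ∧
      (∀ x : H, x ≠ 0 → ∃ y : H, φ y x ≠ 0) ∧
      (∀ x h y : H, φ (x * h) y = φ x (h * y)) := by
  obtain ⟨φ, hφ, assoc⟩ := finite_dimensional_hopf_algebra_is_frobenius_general k H
  exact ⟨φ, fun x hx ↦ DFunLike.exists_ne ((map_ne_zero_iff φ hφ.bijective_left.injective).2 hx),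
    fun x hx ↦ DFunLike.exists_ne ((map_ne_zero_iff φ.flip hφ.bijective_right.injective).2 hx),
    assoc⟩
end

section
/- Let k be a field and let H be a Hopf algebra over k whose underlying ring is artinian (as a left module over itself). Then H is finite-dimensional as a k-vector space. -/
/-!
STATEMENT 1 (Liu–Zhang):
A Hopf algebra over a field `k` whose underlying ring is artinian (as a left module
over itself) is finite-dimensional over `k`.
-/

universe u v

/-!
Let `ε` be the counit. For every module of finite length over a left artinian augmented algebra,
some `e` with `ε e = 1` acts on it with finite rank: such elements can be multiplied along a
composition series, so the module may be assumed simple. Let `L` be a left ideal minimal among those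
not contained in `ker ε`. Its only simple quotient is `L / (L ∩ ker ε)`, which has dimension one, so
a simple module not annihilated by `L` is one-dimensional. Applied to `H` itself this yields a
finite-dimensional right ideal `J = e H` containing `e`.

Choose a finite-dimensional `V` with `Δ J ⊆ V ⊗ H`. From
`Δ e * (h ⊗ 1) = ∑ Δ (e h₁) * (1 ⊗ S h₂) ∈ V ⊗ H`, writing `Δ e = ∑ aᵢ ⊗ bᵢ` with the `bᵢ` linearly
independent, one gets `aᵢ H ⊆ V` for all `i`. As `h = ε e • h = ∑ aᵢ (S bᵢ) h`, it follows that
`H = V`.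
-/

open TensorProduct

theorem eq_comap_subtype_of_minimal_not_le {R M : Type*} [Ring R] [AddCommGroup M] [Module R M]
    {I L : Submodule R M} (hL : Minimal (¬ · ≤ I) L) {K : Submodule R L} (hK : IsCoatom K) :
    K = I.comap L.subtype := by
  have hI : I.comap L.subtype ≠ ⊤ := fun h ↦ hL.prop (Submodule.comap_subtype_eq_top.1 h)
  have hKI : K.map L.subtype ≤ I := by
    by_contra hnot
    have hle : L ≤ K.map L.subtype := hL.le_of_le hnot (Submodule.map_subtype_le L K)
    exact hK.1 (Submodule.map_injective_of_injective L.subtype_injective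
      (by rw [Submodule.map_subtype_top]; exact (Submodule.map_subtype_le L K).antisymm hle))
  exact ((hK.le_iff.1 (Submodule.map_le_iff_le_comap.1 hKI)).resolve_left hI).symm

section AugmentedAlgebra

variable {k A M : Type*} [Field k] [Ring A] [Algebra k A]
  [AddCommGroup M] [Module A M] [Module k M] [IsScalarTower k A M]

theorem hasFiniteRange_lsmul_mul (N : Submodule A M) {a b : A}
    (ha : (Algebra.lsmul k k N a).HasFiniteRange)
    (hb : (Algebra.lsmul k k (M ⧸ N) b).HasFiniteRange) :
    (Algebra.lsmul k k M (a * b)).HasFiniteRange := by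
  let π : M →ₗ[k] M ⧸ N := N.mkQ.restrictScalars k
  obtain ⟨σ, hσ⟩ := π.exists_rightInverse_of_surjective (LinearMap.range_eq_top.2 N.mkQ_surjective)
  let c : M →ₗ[k] M := σ ∘ₗ Algebra.lsmul k k (M ⧸ N) b ∘ₗ π
  have hmem (x : M) : (Algebra.lsmul k k M b - c) x ∈ N.restrictScalars k := by
    change b • x - c x ∈ N
    rw [← Submodule.Quotient.mk_eq_zero, Submodule.Quotient.mk_sub, sub_eq_zero]
    exact (LinearMap.congr_fun hσ (b • π x)).symm
  let d : M →ₗ[k] N := (Algebra.lsmul k k M b - c).codRestrict (N.restrictScalars k) hmem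
  have hsplit : Algebra.lsmul k k M (a * b) =
      N.subtype.restrictScalars k ∘ₗ Algebra.lsmul k k N a ∘ₗ d + Algebra.lsmul k k M a ∘ₗ c := by
    ext x
    change (a * b) • x = a • (b • x - c x) + a • c x
    rw [smul_sub, sub_add_cancel, mul_smul]
  rw [hsplit]
  exact ((ha.comp_right d).comp_left _).add (((hb.comp_right π).comp_left σ).comp_left _)

theorem exists_mem_map_eq_one_of_not_le_ker {ε : A →ₐ[k] k} {L : Ideal A}
    (hL : ¬ L ≤ RingHom.ker ε) : ∃ e ∈ L, ε e = 1 := by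
  obtain ⟨x, hxL, hx⟩ := SetLike.not_le_iff_exists.1 hL
  refine ⟨algebraMap k A (ε x)⁻¹ * x, L.mul_mem_left _ hxL, ?_⟩
  rw [map_mul, AlgHom.commutes]
  exact inv_mul_cancel₀ hx

theorem finite_of_minimal_not_le_ker [IsSimpleModule A M] {ε : A →ₐ[k] k} {L : Ideal A}
    (hL : Minimal (¬ · ≤ RingHom.ker ε) L) {f : L →ₗ[A] M} (hf : f ≠ 0) : Module.Finite k M := by
  obtain ⟨e, heL, he⟩ := exists_mem_map_eq_one_of_not_le_ker hL.prop
  have hsurj : Function.Surjective f := f.surjective_of_ne_zero hf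
  have hker : LinearMap.ker f = Submodule.comap L.subtype (RingHom.ker ε) :=
    eq_comap_subtype_of_minimal_not_le hL (LinearMap.isCoatom_ker_of_surjective hsurj)
  have hspan (x : L) : f x = ε x • f ⟨e, heL⟩ := by
    have hx : x - ε x • ⟨e, heL⟩ ∈ LinearMap.ker f := by
      rw [hker]
      simp [RingHom.mem_ker, he]
    rwa [LinearMap.mem_ker, map_sub, LinearMap.map_smul_of_tower, sub_eq_zero] at hx
  refine ⟨{f ⟨e, heL⟩}, ?_⟩
  rw [Finset.coe_singleton, Submodule.span_singleton_eq_top_iff]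
  exact hsurj.forall.2 fun x ↦ ⟨ε x, (hspan x).symm⟩

theorem exists_map_eq_one_hasFiniteRange_lsmul_of_isSimpleModule [IsArtinianRing A]
    [IsSimpleModule A M] (ε : A →ₐ[k] k) :
    ∃ e : A, ε e = 1 ∧ (Algebra.lsmul k k M e).HasFiniteRange := by
  obtain ⟨L, hL⟩ := exists_minimal_of_wellFoundedLT (fun L : Ideal A ↦ ¬ L ≤ RingHom.ker ε)
    ⟨⊤, fun h ↦ RingHom.ker_ne_top ε (top_le_iff.1 h)⟩
  obtain ⟨e, heL, he⟩ := exists_mem_map_eq_one_of_not_le_ker hL.prop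
  refine ⟨e, he, ?_⟩
  by_cases hem : ∃ m : M, e • m ≠ 0
  · obtain ⟨m, hm⟩ := hem
    let f : L →ₗ[A] M := LinearMap.toSpanSingleton A M m ∘ₗ L.subtype
    have hf : f ≠ 0 := fun h ↦ hm (LinearMap.congr_fun h ⟨e, heL⟩)
    have := finite_of_minimal_not_le_ker hL hf
    exact .of_finite_dom
  · push Not at hem
    have hzero : Algebra.lsmul k k M e = 0 := LinearMap.ext hem
    simp [hzero]

theorem exists_map_eq_one_hasFiniteRange_lsmul [IsArtinianRing A] (ε : A →ₐ[k] k)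
    (hM : IsFiniteLength A M) :
    ∃ e : A, ε e = 1 ∧ (Algebra.lsmul k k M e).HasFiniteRange := by
  induction hM generalizing ‹Module k M› with
  | of_subsingleton => exact ⟨1, map_one ε, .of_finite_dom⟩
  | @of_simple_quotient M _ _ N _ _ ih =>
    obtain ⟨a, ha, haN⟩ := ih
    obtain ⟨b, hb, hbQ⟩ :=
      exists_map_eq_one_hasFiniteRange_lsmul_of_isSimpleModule (M := M ⧸ N) ε
    exact ⟨a * b, by rw [map_mul, ha, hb, one_mul], hasFiniteRange_lsmul_mul N haN hbQ⟩

end AugmentedAlgebra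

section CommSemiring

variable {R M N : Type*} [CommSemiring R] [AddCommMonoid M] [Module R M]
  [AddCommMonoid N] [Module R N]

theorem exists_fg_le_range_rTensor_subtype {T : Submodule R (M ⊗[R] N)} (hT : T.FG) :
    ∃ V : Submodule R M, V.FG ∧ T ≤ LinearMap.range (V.subtype.rTensor N) := by
  obtain ⟨s, rfl⟩ := hT
  obtain ⟨V, hV, hsV⟩ := Submodule.exists_fg_le_subset_range_rTensor_subtype _ s.finite_toSet
  exact ⟨V, hV, Submodule.span_le.2 hsV⟩

theorem mem_of_sum_tmul_basis_mem_range_rTensor {ι : Type*} (b : Module.Basis ι R N)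
    {V : Submodule R M} {c : ι →₀ M}
    (hc : (c.sum fun i m ↦ m ⊗ₜ[R] b i) ∈ LinearMap.range (V.subtype.rTensor N)) (i : ι) :
    c i ∈ V := by
  classical
  obtain ⟨t, ht⟩ := hc
  rw [← equivFinsuppOfBasisRight_symm_apply, LinearEquiv.eq_symm_apply] at ht
  rw [← ht]
  clear ht
  induction t with
  | zero => simp
  | tmul m n => simpa using V.smul_mem _ m.2
  | add x y hx hy => simpa only [map_add, Finsupp.add_apply] using V.add_mem hx hy

end CommSemiring

section HopfAlgebra

variable {R H : Type*} [CommSemiring R] [Semiring H] [HopfAlgebra R H]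

open Coalgebra HopfAlgebra

theorem sum_comul_mul_one_tmul_antipode {ι : Type*} {h : H} (ρ : Coalgebra.Repr R h ι) :
    ∑ i ∈ ρ.index, comul (R := R) (ρ.left i) * 1 ⊗ₜ antipode R (ρ.right i) = h ⊗ₜ[R] (1 : H) := by
  let g : H ⊗[R] H →ₗ[R] H := LinearMap.mul' R H ∘ₗ (antipode R).lTensor H
  let f : (H ⊗[R] H) ⊗[R] H →ₗ[R] H ⊗[R] H :=
    g.lTensor H ∘ₗ (TensorProduct.assoc R H H H).toLinearMap
  have hf (z : H ⊗[R] H) (c : H) : f (z ⊗ₜ c) = z * 1 ⊗ₜ antipode R c := by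
    induction z with
    | zero => simp
    | tmul a b => simp [f, g]
    | add x y hx hy => rw [add_tmul, map_add, hx, hy, add_mul]
  have hg : g ∘ₗ comul = Algebra.linearMap R H ∘ₗ counit := by
    rw [LinearMap.comp_assoc]
    exact mul_antipode_lTensor_comul
  calc ∑ i ∈ ρ.index, comul (R := R) (ρ.left i) * 1 ⊗ₜ antipode R (ρ.right i)
      = f (comul.rTensor H (comul (R := R) h)) := by simp [← ρ.eq, hf]
    _ = (g ∘ₗ comul).lTensor H (comul h) := by simp [f, coassoc_apply, LinearMap.lTensor_comp]
    _ = h ⊗ₜ 1 := by simp [hg, LinearMap.lTensor_comp, lTensor_counit_comul]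

theorem mul_one_tmul_mem_range_rTensor {V : Submodule R H} {t : H ⊗[R] H}
    (ht : t ∈ LinearMap.range (V.subtype.rTensor H)) (s : H) :
    t * 1 ⊗ₜ s ∈ LinearMap.range (V.subtype.rTensor H) := by
  obtain ⟨t, rfl⟩ := ht
  induction t with
  | zero => simp
  | tmul v a => exact ⟨v ⊗ₜ (a * s), by simp⟩
  | add x y hx hy => simpa only [map_add, add_mul] using add_mem hx hy

theorem comul_mul_tmul_one_mem_range_rTensor {J V : Submodule R H}
    (hJ : ∀ r ∈ J, ∀ h : H, r * h ∈ J)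
    (hV : J.map comul ≤ LinearMap.range (V.subtype.rTensor H)) {r : H} (hr : r ∈ J) (h : H) :
    comul (R := R) r * h ⊗ₜ 1 ∈ LinearMap.range (V.subtype.rTensor H) := by
  rw [← sum_comul_mul_one_tmul_antipode (Coalgebra.Repr.arbitrary R h), Finset.mul_sum]
  refine sum_mem fun i _ ↦ ?_
  rw [← mul_assoc, ← Bialgebra.comul_mul]
  exact mul_one_tmul_mem_range_rTensor (hV (Submodule.mem_map_of_mem (hJ r hr _))) _

theorem finite_of_fg_rightIdeal_of_counit_eq_one [Module.Free R H] {J : Submodule R H} (hfg : J.FG)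
    (hJ : ∀ r ∈ J, ∀ h : H, r * h ∈ J) {e : H} (he : e ∈ J) (he1 : counit (R := R) e = 1) :
    Module.Finite R H := by
  obtain ⟨V, hV, hJV⟩ := exists_fg_le_range_rTensor_subtype (hfg.map comul)
  let b := Module.Free.chooseBasis R H
  obtain ⟨c, hc⟩ := eq_repr_basis_right b (comul (R := R) e)
  have hcV (i) (h : H) : c i * h ∈ V := by
    have hmul : (c.mapRange (· * h) (zero_mul h)).sum (fun i a ↦ a ⊗ₜ[R] b i) =
        comul (R := R) e * h ⊗ₜ 1 := by
      rw [← hc, Finsupp.sum_mapRange_index (by simp), Finsupp.sum_mul]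
      simp
    exact mem_of_sum_tmul_basis_mem_range_rTensor b
      (hmul ▸ comul_mul_tmul_one_mem_range_rTensor hJ hJV he h) i
  have hone : c.sum (fun i a ↦ a * antipode R (b i)) = 1 := by
    have := mul_antipode_lTensor_comul_apply (R := R) e
    rw [← hc, he1, map_one] at this
    simpa [Finsupp.sum] using this
  have htop : V = ⊤ := by
    refine eq_top_iff.2 fun h _ ↦ ?_
    rw [← one_mul h, ← hone, Finsupp.sum_mul]
    exact sum_mem fun i _ ↦ by simpa only [mul_assoc] using hcV i (antipode R (b i) * h)
  exact ⟨htop ▸ hV⟩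

end HopfAlgebra

theorem artinian_hopf_algebra_is_finite_dimensional
    (k : Type u) [Field k] (H : Type v) [Ring H] [HopfAlgebra k H]
    [IsArtinianRing H] :
    FiniteDimensional k H := by
  have hlength : IsFiniteLength H H :=
    isFiniteLength_iff_isNoetherian_isArtinian.2 ⟨inferInstance, inferInstance⟩
  obtain ⟨e, he, heH⟩ :=
    exists_map_eq_one_hasFiniteRange_lsmul (Bialgebra.counitAlgHom k H) hlength
  refine finite_of_fg_rightIdeal_of_counit_eq_one heH ?_ ⟨1, mul_one e⟩ he
  rintro _ ⟨x, rfl⟩ h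
  exact ⟨x * h, (mul_assoc e x h).symm⟩
end

section
/- Let k be a field and let T be a group such that the group algebra kT is a noetherian ring. Then T satisfies the ascending chain condition on subgroups. -/
/-!
STATEMENT 3:
If the group algebra `kT` is a noetherian ring, then the group `T` satisfies the
ascending chain condition on subgroups.
-/

universe u v

/-!
A subgroup `H` of `G` generates the left ideal `∑ R[G](h - 1)`, `h ∈ H`. Since `gh` and `g` lie in
the same left coset of `H`, this ideal vanishes under the projection `R[G] → R[G ⧸ H]`, whereas
`g - 1` maps to `gH - H`, which is nonzero for `g ∉ H`. So the ideal determines `H`, and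
strictly ascending chains of subgroups give strictly ascending chains of left ideals.
-/

section

open MonoidAlgebra

theorem monoidAlgebra_mapDomain_sub {R M N : Type*} [Ring R] (f : M → N) (x y : MonoidAlgebra R M) :
    mapDomain f (x - y) = mapDomain f x - mapDomain f y :=
  map_sub (mapDomainLinearMap R R f) x y

theorem mapDomain_mk_mul_single_of_mem {R G : Type*} [Semiring R] [Group G] {H : Subgroup G}
    (x : MonoidAlgebra R G) {h : G} (hh : h ∈ H) :
    mapDomain (QuotientGroup.mk : G → G ⧸ H) (x * single h 1) = mapDomain QuotientGroup.mk x := by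
  induction x using MonoidAlgebra.induction_linear with
  | zero => rw [zero_mul]
  | add x y hx hy => rw [add_mul, mapDomain_add, mapDomain_add, hx, hy]
  | single g r =>
    rw [single_mul_single, mul_one, mapDomain_single, mapDomain_single,
      QuotientGroup.mk_mul_of_mem g hh]

variable {R G : Type*} [Ring R] [Group G] {H : Subgroup G}

variable (R) in
/-- The left augmentation ideal of a subgroup `H`: the left ideal of `R[G]` generated by the
elements `h - 1` with `h ∈ H`. It translates chains of subgroups into chains of left ideals. -/
noncomputable def leftAugmentationIdeal (H : Subgroup G) : Ideal (MonoidAlgebra R G) :=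
  Ideal.span ((fun h ↦ single h 1 - 1) '' (H : Set G))

namespace leftAugmentationIdeal

theorem mono : Monotone (leftAugmentationIdeal R : Subgroup G → Ideal (MonoidAlgebra R G)) :=
  fun _ _ hHK ↦ Ideal.span_mono (Set.image_mono hHK)

theorem mapDomain_mk_eq_zero {x : MonoidAlgebra R G} (hx : x ∈ leftAugmentationIdeal R H) :
    mapDomain (QuotientGroup.mk : G → G ⧸ H) x = 0 := by
  induction hx using Submodule.closure_induction with
  | zero => exact mapDomain_zero _
  | add x y _ _ hx hy => rw [mapDomain_add, hx, hy, add_zero]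
  | smul_mem y x hx =>
    obtain ⟨h, hh, rfl⟩ := hx
    rw [smul_eq_mul, mul_sub, mul_one, monoidAlgebra_mapDomain_sub,
      mapDomain_mk_mul_single_of_mem y hh, sub_self]

theorem single_sub_one_mem_iff [Nontrivial R] {g : G} :
    single g 1 - 1 ∈ leftAugmentationIdeal R H ↔ g ∈ H := by
  refine ⟨fun hg ↦ ?_, fun hg ↦ Ideal.subset_span ⟨g, hg, rfl⟩⟩
  have hsingle : single (g : G ⧸ H) (1 : R) = single ((1 : G) : G ⧸ H) 1 := by
    rw [← sub_eq_zero, ← mapDomain_single, ← mapDomain_single, ← monoidAlgebra_mapDomain_sub,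
      ← one_def, mapDomain_mk_eq_zero hg]
  have hcoset : (g : G ⧸ H) = (1 : G) := (single_left_inj one_ne_zero).mp hsingle
  simpa only [inv_one, one_mul] using QuotientGroup.eq.mp hcoset.symm

theorem injective [Nontrivial R] :
    Function.Injective (leftAugmentationIdeal R : Subgroup G → Ideal (MonoidAlgebra R G)) :=
  fun H K hHK ↦ Subgroup.ext fun g ↦ by
    rw [← single_sub_one_mem_iff (R := R), hHK, single_sub_one_mem_iff]

theorem strictMono [Nontrivial R] :
    StrictMono (leftAugmentationIdeal R : Subgroup G → Ideal (MonoidAlgebra R G)) :=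
  mono.strictMono_of_injective injective

end leftAugmentationIdeal

end

theorem acc_subgroups_of_noetherian_group_algebra_general (R : Type*) [Ring R] [Nontrivial R]
    (G : Type*) [Group G] [IsNoetherianRing (MonoidAlgebra R G)] : WellFoundedGT (Subgroup G) :=
  (leftAugmentationIdeal.strictMono (R := R)).wellFoundedGT

theorem acc_subgroups_of_noetherian_group_algebra
    (k : Type u) [Field k] (T : Type v) [Group T]
    (h₁ : IsNoetherianRing (MonoidAlgebra k T))
    (h₂ : IsNoetherianRing (MonoidAlgebra k T)ᵐᵒᵖ) :
    ∀ f : ℕ →o Subgroup T, ∃ n : ℕ, ∀ m : ℕ, n ≤ m → f m = f n := by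
  have := acc_subgroups_of_noetherian_group_algebra_general k T
  exact fun f ↦ (WellFoundedGT.monotone_chain_condition f).imp fun n hn m hnm ↦ (hn m hnm).symm
end

section
/- (Molnar) Let k be a field and let H be a commutative Hopf algebra over k. Then H is affine (finitely generated as a k-algebra) if and only if H is noetherian. -/
/-!
STATEMENT 5 (Molnar):
A commutative Hopf algebra over a field `k` is affine (finitely generated as a
`k`-algebra) if and only if it is noetherian.
-/

universe u v

/-!
If the augmentation ideal `ker ε` is finitely generated, its generators lie in a finitely generated
Hopf subalgebra `A`, because every element lies in a finite-dimensional subcoalgebra. Two algebra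
maps out of `H` that agree on `A` agree everywhere: their convolution quotient is trivial on `A`,
hence on `ker ε`. So `A → H` is an epimorphism of rings. Over the residue field of a minimal prime
of the noetherian ring `A`, an epimorphism is surjective; hence for every finite-dimensional
subcoalgebra `C` there is `s ≠ 0` in `A` with `s C ⊆ A`. The elements with this property form a left
coideal and an ideal of `A`, and such a subspace contains `1` as soon as it is nonzero: it contains
some `u` with `ε(u) ≠ 0`, and `ε(u) = Σ S(u₁) u₂`. Thus `C ⊆ A`, and `A = H`.
-/

open TensorProduct Coalgebra WithConv

section Slice

variable {R M N N' : Type*} [CommSemiring R] [AddCommMonoid M] [Module R M]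
  [AddCommMonoid N] [Module R N] [AddCommMonoid N'] [Module R N']

/-- The slice map `f ⊗ id : M ⊗ N → N` of a linear functional `f` on the left factor. -/
noncomputable def sliceLeft (f : Module.Dual R M) : M ⊗[R] N →ₗ[R] N :=
  (TensorProduct.lid R N).toLinearMap ∘ₗ f.rTensor N

/-- The slice map `id ⊗ f : M ⊗ N → M` of a linear functional `f` on the right factor. -/
noncomputable def sliceRight (f : Module.Dual R N) : M ⊗[R] N →ₗ[R] M :=
  (TensorProduct.rid R M).toLinearMap ∘ₗ f.lTensor M

@[simp]
lemma sliceLeft_tmul (f : Module.Dual R M) (m : M) (n : N) : sliceLeft f (m ⊗ₜ[R] n) = f m • n := by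
  simp [sliceLeft]

@[simp]
lemma sliceRight_tmul (f : Module.Dual R N) (m : M) (n : N) :
    sliceRight f (m ⊗ₜ[R] n) = f n • m := by
  simp [sliceRight]

lemma sliceLeft_comp_lTensor (f : Module.Dual R M) (g : N →ₗ[R] N') :
    sliceLeft f ∘ₗ g.lTensor M = g ∘ₗ sliceLeft f := by
  ext; simp

lemma sliceRight_comp_rTensor (f : Module.Dual R M) (g : N →ₗ[R] N') :
    sliceRight f ∘ₗ g.rTensor M = g ∘ₗ sliceRight f := by
  ext; simp

/-- The image of `P ⊗ Q` in `M ⊗ N`, for submodules `P` of `M` and `Q` of `N`. -/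
abbrev tensorSubmodule (P : Submodule R M) (Q : Submodule R N) : Submodule R (M ⊗[R] N) :=
  Submodule.map₂ (TensorProduct.mk R M N) P Q

lemma exists_fg_le_tensorSubmodule {T : Submodule R (M ⊗[R] N)} (hT : T.FG) :
    ∃ (P : Submodule R M) (Q : Submodule R N), P.FG ∧ Q.FG ∧ T ≤ tensorSubmodule P Q := by
  obtain ⟨t, rfl⟩ := hT
  obtain ⟨P, Q, hP, hQ, htPQ⟩ := exists_finite_submodule_of_setFinite (t : Set (M ⊗[R] N))
    t.finite_toSet
  rw [range_mapIncl] at htPQ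
  exact ⟨P, Q, Module.Finite.iff_fg.1 hP, Module.Finite.iff_fg.1 hQ, Submodule.span_le.2 htPQ⟩

variable {P : Submodule R M} {Q : Submodule R N} {w w' : M ⊗[R] N}

lemma sliceLeft_mem (hw : w ∈ tensorSubmodule P Q) (f : Module.Dual R M) : sliceLeft f w ∈ Q := by
  have h_le : tensorSubmodule P Q ≤ Q.comap (sliceLeft f) :=
    Submodule.map₂_le.2 fun m _ n hn ↦ by simpa using Q.smul_mem (f m) hn
  exact h_le hw

lemma sliceRight_mem (hw : w ∈ tensorSubmodule P Q) (f : Module.Dual R N) :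
    sliceRight f w ∈ P := by
  have h_le : tensorSubmodule P Q ≤ P.comap (sliceRight f) :=
    Submodule.map₂_le.2 fun m hm n _ ↦ by simpa using P.smul_mem (f n) hm
  exact h_le hw

lemma ext_sliceLeft [Module.Free R M] (h : ∀ f : Module.Dual R M, sliceLeft f w = sliceLeft f w') :
    w = w' := by
  classical
  let b := Module.Free.chooseBasis R M
  apply (TensorProduct.equivFinsuppOfBasisLeft (N := N) b).injective
  ext i
  rw [TensorProduct.equivFinsuppOfBasisLeft_apply, TensorProduct.equivFinsuppOfBasisLeft_apply]
  exact h (b.coord i)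

lemma ext_sliceRight [Module.Free R N]
    (h : ∀ f : Module.Dual R N, sliceRight f w = sliceRight f w') : w = w' := by
  classical
  let b := Module.Free.chooseBasis R N
  apply (TensorProduct.equivFinsuppOfBasisRight (M := M) b).injective
  ext i
  rw [TensorProduct.equivFinsuppOfBasisRight_apply, TensorProduct.equivFinsuppOfBasisRight_apply]
  exact h (b.coord i)

end Slice

lemma mem_tensorSubmodule_of_slice_mem {k M N : Type*} [Field k] [AddCommGroup M] [Module k M]
    [AddCommGroup N] [Module k N] {P : Submodule k M} {Q : Submodule k N} {w : M ⊗[k] N}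
    (hP : ∀ f, sliceRight f w ∈ P) (hQ : ∀ f, sliceLeft f w ∈ Q) : w ∈ tensorSubmodule P Q := by
  obtain ⟨p, hp⟩ := P.exists_isCompl
  obtain ⟨q, hq⟩ := Q.exists_isCompl
  have hw_left : (P.projection p hp).rTensor N w = w := ext_sliceRight fun f ↦ by
    rw [← LinearMap.comp_apply, sliceRight_comp_rTensor, LinearMap.comp_apply]
    exact Submodule.projection_apply_of_mem_left hp (hP f)
  have hw_right : (Q.projection q hq).lTensor M w = w := ext_sliceLeft fun f ↦ by
    rw [← LinearMap.comp_apply, sliceLeft_comp_lTensor, LinearMap.comp_apply]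
    exact Submodule.projection_apply_of_mem_left hq (hQ f)
  have hw : TensorProduct.map (P.projection p hp) (Q.projection q hq) w = w := by
    rw [← LinearMap.rTensor_comp_lTensor, LinearMap.comp_apply, hw_right, hw_left]
  have h_range := LinearMap.mem_range_self (TensorProduct.map (P.projection p hp)
    (Q.projection q hq)) w
  rwa [hw, TensorProduct.range_map, Submodule.range_projection, Submodule.range_projection]
    at h_range

section DualAction

variable {R C : Type*} [CommSemiring R] [AddCommMonoid C] [Module R C] [Coalgebra R C]

/-- The right action `c ↼ f = Σ f(c₁) c₂` of the dual algebra on a coalgebra. -/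
noncomputable def rightHit (f : Module.Dual R C) : C →ₗ[R] C := sliceLeft f ∘ₗ comul

/-- The left action `f ⇀ c = Σ f(c₂) c₁` of the dual algebra on a coalgebra. -/
noncomputable def leftHit (f : Module.Dual R C) : C →ₗ[R] C := sliceRight f ∘ₗ comul

@[simp]
lemma rightHit_counit : rightHit (counit (R := R) (A := C)) = LinearMap.id := by
  ext; simp [rightHit, sliceLeft]

@[simp]
lemma leftHit_counit : leftHit (counit (R := R) (A := C)) = LinearMap.id := by
  ext; simp [leftHit, sliceRight]

lemma rightHit_comp_rightHit (f g : Module.Dual R C) :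
    rightHit g ∘ₗ rightHit f = rightHit (g ∘ₗ rightHit f) := by
  have h_assoc : sliceLeft g ∘ₗ sliceLeft f ∘ₗ (TensorProduct.assoc R C C C).toLinearMap =
      sliceLeft (g ∘ₗ sliceLeft f) := by
    ext; simp [smul_smul]
  have h_rTensor : sliceLeft (g ∘ₗ sliceLeft f) ∘ₗ comul.rTensor C =
      sliceLeft (N := C) (g ∘ₗ rightHit f) := by
    ext; simp [rightHit]
  calc rightHit g ∘ₗ rightHit f
    _ = sliceLeft g ∘ₗ (comul ∘ₗ sliceLeft f) ∘ₗ comul := rfl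
    _ = sliceLeft g ∘ₗ sliceLeft f ∘ₗ comul.lTensor C ∘ₗ comul := by
      rw [← sliceLeft_comp_lTensor]; rfl
    _ = (sliceLeft (g ∘ₗ sliceLeft f) ∘ₗ comul.rTensor C) ∘ₗ comul := by
      rw [← coassoc, ← h_assoc]; rfl
    _ = rightHit (g ∘ₗ rightHit f) := by rw [h_rTensor]; rfl

lemma leftHit_comp_leftHit (f g : Module.Dual R C) :
    leftHit g ∘ₗ leftHit f = leftHit (g ∘ₗ leftHit f) := by
  have h_assoc : sliceRight g ∘ₗ sliceRight f ∘ₗ (TensorProduct.assoc R C C C).symm.toLinearMap =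
      sliceRight (g ∘ₗ sliceRight f) := by
    ext; simp [smul_smul]
  have h_lTensor : sliceRight (g ∘ₗ sliceRight f) ∘ₗ comul.lTensor C =
      sliceRight (M := C) (g ∘ₗ leftHit f) := by
    ext; simp [leftHit]
  calc leftHit g ∘ₗ leftHit f
    _ = sliceRight g ∘ₗ (comul ∘ₗ sliceRight f) ∘ₗ comul := rfl
    _ = sliceRight g ∘ₗ sliceRight f ∘ₗ comul.rTensor C ∘ₗ comul := by
      rw [← sliceRight_comp_rTensor]; rfl
    _ = (sliceRight (g ∘ₗ sliceRight f) ∘ₗ comul.lTensor C) ∘ₗ comul := by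
      rw [← coassoc_symm, ← h_assoc]; rfl
    _ = leftHit (g ∘ₗ leftHit f) := by rw [h_lTensor]; rfl

lemma rightHit_comp_leftHit (f g : Module.Dual R C) :
    rightHit f ∘ₗ leftHit g = leftHit g ∘ₗ rightHit f := by
  have h_assoc : sliceLeft f ∘ₗ sliceRight g =
      sliceRight g ∘ₗ sliceLeft f ∘ₗ (TensorProduct.assoc R C C C).toLinearMap := by
    ext; simp [smul_smul, mul_comm]
  calc rightHit f ∘ₗ leftHit g
    _ = sliceLeft f ∘ₗ (comul ∘ₗ sliceRight g) ∘ₗ comul := rfl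
    _ = (sliceLeft f ∘ₗ sliceRight g) ∘ₗ comul.rTensor C ∘ₗ comul := by
      rw [← sliceRight_comp_rTensor]; rfl
    _ = sliceRight g ∘ₗ sliceLeft f ∘ₗ comul.lTensor C ∘ₗ comul := by
      rw [h_assoc, ← coassoc]; rfl
    _ = sliceRight g ∘ₗ (comul ∘ₗ sliceLeft f) ∘ₗ comul := by
      rw [← sliceLeft_comp_lTensor]; rfl

/-- A submodule `V` of a coalgebra `C` is a left coideal if `Δ(V) ⊆ C ⊗ V`. -/
def IsLeftCoideal (V : Submodule R C) : Prop :=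
  ∀ v ∈ V, comul (R := R) v ∈ tensorSubmodule ⊤ V

/-- A submodule `D` of a coalgebra is a subcoalgebra if `Δ(D) ⊆ D ⊗ D`. -/
def IsSubcoalgebra (D : Submodule R C) : Prop :=
  ∀ d ∈ D, comul (R := R) d ∈ tensorSubmodule D D

lemma IsSubcoalgebra.isLeftCoideal {D : Submodule R C} (hD : IsSubcoalgebra D) :
    IsLeftCoideal D :=
  fun d hd ↦ Submodule.map₂_le_map₂ le_top le_rfl (hD d hd)

lemma IsSubcoalgebra.sup {D E : Submodule R C} (hD : IsSubcoalgebra D) (hE : IsSubcoalgebra E) :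
    IsSubcoalgebra (D ⊔ E) := by
  intro x hx
  obtain ⟨d, hd, e, he, rfl⟩ := Submodule.mem_sup.1 hx
  rw [map_add]
  exact add_mem (Submodule.map₂_le_map₂ le_sup_left le_sup_left (hD d hd))
    (Submodule.map₂_le_map₂ le_sup_right le_sup_right (hE e he))

lemma IsLeftCoideal.exists_counit_ne_zero {V : Submodule R C} (hV : IsLeftCoideal V)
    (hne : V ≠ ⊥) : ∃ v ∈ V, counit (R := R) v ≠ 0 := by
  by_contra! hε
  refine hne ((Submodule.eq_bot_iff _).2 fun v hv ↦ ?_)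
  have h_le : tensorSubmodule ⊤ V ≤ LinearMap.ker (sliceRight (M := C) (counit (R := R))) :=
    Submodule.map₂_le.2 fun m _ n hn ↦ by simp [hε n hn]
  calc v = leftHit counit v := by simp
    _ = 0 := h_le (hV v hv)

end DualAction

section FundamentalTheorem

variable {k C : Type*} [Field k] [AddCommGroup C] [Module k C] [Coalgebra k C]

lemma isSubcoalgebra_of_hit_mem {D : Submodule k C} (hl : ∀ f, D.map (leftHit f) ≤ D)
    (hr : ∀ f, D.map (rightHit f) ≤ D) : IsSubcoalgebra D := fun _ hd ↦
  mem_tensorSubmodule_of_slice_mem (fun f ↦ hl f (Submodule.mem_map_of_mem hd))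
    (fun f ↦ hr f (Submodule.mem_map_of_mem hd))

lemma exists_fg_map_hit_le {V : Submodule k C} (hV : V.FG) :
    ∃ W : Submodule k C, W.FG ∧ ∀ f, V.map (leftHit f) ≤ W ∧ V.map (rightHit f) ≤ W := by
  obtain ⟨P, Q, hP, hQ, hPQ⟩ := exists_fg_le_tensorSubmodule (hV.map (comul (R := k)))
  have h_comul : ∀ v ∈ V, comul v ∈ tensorSubmodule P Q := fun v hv ↦
    hPQ (Submodule.mem_map_of_mem hv)
  refine ⟨P ⊔ Q, hP.sup hQ, fun f ↦ ⟨?_, ?_⟩⟩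
  · exact Submodule.map_le_iff_le_comap.2 fun v hv ↦
      Submodule.mem_sup_left (sliceRight_mem (h_comul v hv) f)
  · exact Submodule.map_le_iff_le_comap.2 fun v hv ↦
      Submodule.mem_sup_right (sliceLeft_mem (h_comul v hv) f)

theorem exists_fg_isSubcoalgebra_ge {V : Submodule k C} (hV : V.FG) :
    ∃ D : Submodule k C, D.FG ∧ V ≤ D ∧ IsSubcoalgebra D := by
  let D : Submodule k C := ⨆ x : Module.Dual k C × Module.Dual k C,
    V.map (leftHit x.2 ∘ₗ rightHit x.1)
  have h_le_D (f g : Module.Dual k C) : V.map (leftHit g ∘ₗ rightHit f) ≤ D :=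
    le_iSup (fun x : Module.Dual k C × Module.Dual k C ↦
      V.map (leftHit x.2 ∘ₗ rightHit x.1)) (f, g)
  refine ⟨D, ?_, ?_, isSubcoalgebra_of_hit_mem (fun f ↦ ?_) fun f ↦ ?_⟩
  · obtain ⟨W, hW, hVW⟩ := exists_fg_map_hit_le hV
    obtain ⟨X, hX, hWX⟩ := exists_fg_map_hit_le hW
    refine Submodule.FG.of_le hX (iSup_le fun ⟨f, g⟩ ↦ ?_)
    rw [Submodule.map_comp]
    exact (Submodule.map_mono (hVW f).2).trans (hWX g).1
  · simpa using h_le_D counit counit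
  · rw [Submodule.map_iSup]
    refine iSup_le fun ⟨f', g⟩ ↦ ?_
    rw [← Submodule.map_comp, ← LinearMap.comp_assoc, leftHit_comp_leftHit]
    exact h_le_D _ _
  · rw [Submodule.map_iSup]
    refine iSup_le fun ⟨f', g⟩ ↦ ?_
    rw [← Submodule.map_comp, ← LinearMap.comp_assoc, rightHit_comp_leftHit, LinearMap.comp_assoc,
      rightHit_comp_rightHit]
    exact h_le_D _ _

end FundamentalTheorem

section Antipode

open HopfAlgebra (antipode antipodeAlgHom)
open Algebra.TensorProduct (includeLeft includeRight)

variable {R H S : Type*} [CommSemiring R] [CommSemiring H] [HopfAlgebra R H] [CommSemiring S]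
  [Algebra R S]

lemma toConv_mul_toConv_comp_antipode (x : H →ₐ[R] S) :
    toConv x * toConv (x.comp (antipodeAlgHom R H)) = 1 := by
  have h_id : toConv (AlgHom.id R H) * toConv (antipodeAlgHom R H) = 1 :=
    mul_inv_cancel (toConv (AlgHom.id R H))
  have h_comp := AlgHom.comp_convMul_distrib x (toConv (AlgHom.id R H))
    (toConv (antipodeAlgHom R H))
  rw [h_id] at h_comp
  refine WithConv.ofConv_injective (h_comp.symm.trans ?_)
  ext c
  simp [AlgHom.convOne_def]

lemma toConv_comp_antipode_mul_toConv (x : H →ₐ[R] S) :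
    toConv (x.comp (antipodeAlgHom R H)) * toConv x = 1 := by
  have h_comp := AlgHom.comp_convMul_distrib x (toConv (antipodeAlgHom R H))
    (toConv (AlgHom.id R H))
  rw [AlgHom.antipode_id_cancel] at h_comp
  refine WithConv.ofConv_injective (h_comp.symm.trans ?_)
  ext c
  simp [AlgHom.convOne_def]

lemma antipode_antipode (c : H) : antipode R (antipode R c) = c :=
  DFunLike.congr_fun (congrArg ofConv (inv_inv (toConv (AlgHom.id R H)))) c

lemma toConv_includeLeft_mul_toConv_includeRight :
    toConv (includeLeft : H →ₐ[R] H ⊗[R] H) * toConv includeRight =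
      toConv (Bialgebra.comulAlgHom R H) := by
  have h_id : (Algebra.TensorProduct.lmul' R).comp (Algebra.TensorProduct.map
      (includeLeft : H →ₐ[R] H ⊗[R] H) includeRight) = AlgHom.id R (H ⊗[R] H) := by
    ext <;> simp
  rw [AlgHom.convMul_def, ← AlgHom.comp_assoc, h_id, AlgHom.id_comp]

lemma toConv_comulAlgHom_comp_antipode :
    toConv ((Bialgebra.comulAlgHom R H).comp (antipodeAlgHom R H)) =
      toConv (includeRight.comp (antipodeAlgHom R H)) *
        toConv (includeLeft.comp (antipodeAlgHom R H)) := by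
  refine left_inv_eq_right_inv (toConv_comp_antipode_mul_toConv (Bialgebra.comulAlgHom R H)) ?_
  rw [← toConv_includeLeft_mul_toConv_includeRight, mul_assoc,
    ← mul_assoc (toConv includeRight), toConv_mul_toConv_comp_antipode, one_mul,
    toConv_mul_toConv_comp_antipode]

lemma comul_antipode (c : H) : comul (R := R) (antipode R c) =
    TensorProduct.map (antipode R) (antipode R) (TensorProduct.comm R H H (comul c)) := by
  have h_map : LinearMap.mul' R (H ⊗[R] H) ∘ₗ
      TensorProduct.map ((includeRight : H →ₐ[R] H ⊗[R] H).toLinearMap ∘ₗ antipode R)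
        ((includeLeft : H →ₐ[R] H ⊗[R] H).toLinearMap ∘ₗ antipode R) =
      TensorProduct.map (antipode R) (antipode R) ∘ₗ
        (TensorProduct.comm R H H).toLinearMap := by
    ext; simp
  exact (DFunLike.congr_fun (congrArg ofConv toConv_comulAlgHom_comp_antipode) c).trans
    (LinearMap.congr_fun h_map (comul c))

/-- In Sweedler notation, `1 ⊗ c = Σ (S(c₁) ⊗ 1) Δ(c₂)`. -/
lemma one_tmul_eq_mul_antipode_comul (c : H) :
    (1 : H) ⊗ₜ[R] c = LinearMap.mul' R (H ⊗[R] H) (TensorProduct.map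
      (includeLeft.toLinearMap ∘ₗ antipode R) (comul (R := R)) (comul c)) := by
  have h_conv : toConv (includeRight : H →ₐ[R] H ⊗[R] H) =
      toConv (includeLeft.comp (antipodeAlgHom R H)) * toConv (Bialgebra.comulAlgHom R H) := by
    rw [← toConv_includeLeft_mul_toConv_includeRight, ← mul_assoc,
      toConv_comp_antipode_mul_toConv, one_mul]
  exact DFunLike.congr_fun (congrArg ofConv h_conv) c

lemma IsSubcoalgebra.map_antipode {D : Submodule R H} (hD : IsSubcoalgebra D) :
    IsSubcoalgebra (D.map (antipode R)) := by
  rintro _ ⟨d, hd, rfl⟩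
  have h_le : tensorSubmodule D D ≤ (tensorSubmodule (D.map (antipode R))
      (D.map (antipode R))).comap (TensorProduct.map (antipode R) (antipode R) ∘ₗ
        (TensorProduct.comm R H H).toLinearMap) :=
    Submodule.map₂_le.2 fun a ha b hb ↦ Submodule.apply_mem_map₂ _
      (Submodule.mem_map_of_mem hb) (Submodule.mem_map_of_mem ha)
  rw [comul_antipode]
  exact h_le (hD d hd)

/-- A subalgebra `A` of a Hopf algebra is a Hopf subalgebra if `Δ(A) ⊆ A ⊗ A` and `S(A) ⊆ A`. -/
structure IsHopfSubalgebra (A : Subalgebra R H) : Prop where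
  isSubcoalgebra : IsSubcoalgebra (Subalgebra.toSubmodule A)
  antipode_mem : ∀ a ∈ A, antipode R a ∈ A

lemma isHopfSubalgebra_adjoin {D : Submodule R H} (hD : IsSubcoalgebra D)
    (hDS : D.map (antipode R) ≤ D) : IsHopfSubalgebra (Algebra.adjoin R (D : Set H)) := by
  set A := Algebra.adjoin R (D : Set H)
  have hDA : D ≤ Subalgebra.toSubmodule A := Algebra.subset_adjoin
  have h_tensor : tensorSubmodule (Subalgebra.toSubmodule A) (Subalgebra.toSubmodule A) =
      Subalgebra.toSubmodule (Algebra.TensorProduct.map A.val A.val).range :=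
    (TensorProduct.range_mapIncl _ _).symm
  have h_comul : A ≤ (Algebra.TensorProduct.map A.val A.val).range.comap
      (Bialgebra.comulAlgHom R H) :=
    Algebra.adjoin_le fun d hd ↦ h_tensor.le (Submodule.map₂_le_map₂ hDA hDA (hD d hd))
  have h_antipode : A ≤ A.comap (antipodeAlgHom R H) :=
    Algebra.adjoin_le fun d hd ↦ hDA (hDS (Submodule.mem_map_of_mem hd))
  exact ⟨fun a ha ↦ h_tensor.ge (h_comul ha), h_antipode⟩

end Antipode

theorem exists_fg_isHopfSubalgebra_ge {k H : Type*} [Field k] [CommRing H] [HopfAlgebra k H]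
    {V : Submodule k H} (hV : V.FG) :
    ∃ A : Subalgebra k H, A.FG ∧ V ≤ Subalgebra.toSubmodule A ∧ IsHopfSubalgebra A := by
  obtain ⟨D, hD_fg, hVD, hD⟩ := exists_fg_isSubcoalgebra_ge hV
  let E := D ⊔ D.map (HopfAlgebra.antipode k)
  have hE_antipode : E.map (HopfAlgebra.antipode k) ≤ E := by
    rw [Submodule.map_sup, ← Submodule.map_comp]
    have h_invol : HopfAlgebra.antipode k ∘ₗ HopfAlgebra.antipode k = LinearMap.id (M := H) :=
      LinearMap.ext antipode_antipode
    rw [h_invol, Submodule.map_id, sup_comm]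
  obtain ⟨t, ht⟩ := hD_fg.sup (hD_fg.map (HopfAlgebra.antipode k))
  refine ⟨Algebra.adjoin k (E : Set H), ⟨t, ?_⟩, ?_,
    isHopfSubalgebra_adjoin (hD.sup hD.map_antipode) hE_antipode⟩
  · rw [← Algebra.adjoin_span, ht]
  · exact hVD.trans (le_sup_left.trans Algebra.subset_adjoin)

section Epimorphism

open HopfAlgebra (antipode antipodeAlgHom)

variable {R H : Type*} [CommRing R] [CommRing H] [HopfAlgebra R H]

theorem algHom_ext_of_isLeftCoideal {S : Type*} [CommRing S] [Algebra R S] {V : Submodule R H}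
    (hV : IsLeftCoideal V) (hV_gen : RingHom.ker (Bialgebra.counitAlgHom R H) ≤
      Ideal.span {v | v ∈ V ∧ v ∈ RingHom.ker (Bialgebra.counitAlgHom R H)})
    {x y : H →ₐ[R] S} (hxy : ∀ v ∈ V, x v = y v) : x = y := by
  let φ := toConv (x.comp (antipodeAlgHom R H)) * toConv y
  have hφ_V : ∀ v ∈ V, φ.ofConv v = algebraMap R S (counit v) := by
    intro v hv
    have h_le : tensorSubmodule ⊤ V ≤ LinearMap.eqLocus
        (LinearMap.mul' R S ∘ₗ TensorProduct.map (x.toLinearMap ∘ₗ antipode R) y.toLinearMap)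
        (LinearMap.mul' R S ∘ₗ TensorProduct.map (x.toLinearMap ∘ₗ antipode R) x.toLinearMap) :=
      Submodule.map₂_le.2 fun m _ n hn ↦ by simp [hxy n hn]
    calc φ.ofConv v
      _ = (toConv (x.comp (antipodeAlgHom R H)) * toConv x).ofConv v := h_le (hV v hv)
      _ = algebraMap R S (counit v) := by
        rw [toConv_comp_antipode_mul_toConv]; rfl
  have hφ_ker : RingHom.ker (Bialgebra.counitAlgHom R H) ≤ RingHom.ker φ.ofConv := by
    refine hV_gen.trans (Ideal.span_le.2 fun v hv ↦ ?_)
    have hε : counit (R := R) v = 0 := hv.2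
    exact (hφ_V v hv.1).trans (by rw [hε, map_zero])
  have hφ : φ = 1 := by
    refine WithConv.ofConv_injective (AlgHom.ext fun c ↦ ?_)
    have h_sub : c - algebraMap R H (counit c) ∈ RingHom.ker φ.ofConv :=
      hφ_ker (by simp [RingHom.mem_ker])
    rwa [RingHom.mem_ker, map_sub, AlgHom.commutes, sub_eq_zero] at h_sub
  have h_eq : toConv x = toConv y := by
    rw [← mul_one (toConv x), ← hφ, ← mul_assoc, toConv_mul_toConv_comp_antipode, one_mul]
  exact congrArg ofConv h_eq

theorem isEpi_of_isLeftCoideal {A : Subalgebra R H}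
    (hA : IsLeftCoideal (Subalgebra.toSubmodule A))
    (hA_gen : RingHom.ker (Bialgebra.counitAlgHom R H) ≤
      Ideal.span {a | a ∈ A ∧ a ∈ RingHom.ker (Bialgebra.counitAlgHom R H)}) :
    Algebra.IsEpi A H := by
  let x : H →ₐ[A] H ⊗[A] H := Algebra.TensorProduct.includeRight
  let y : H →ₐ[A] H ⊗[A] H := Algebra.TensorProduct.includeLeft
  have hxy : x.restrictScalars R = y.restrictScalars R :=
    algHom_ext_of_isLeftCoideal hA hA_gen fun a ha ↦
      (x.commutes ⟨a, ha⟩).trans (y.commutes ⟨a, ha⟩).symm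
  exact (Algebra.isEpi_iff_forall_one_tmul_eq A H).2 (DFunLike.congr_fun hxy)

end Epimorphism

section MinimalPrime

lemma subsingleton_of_isNilpotent {R M : Type*} [CommRing R] [AddCommGroup M] [Module R M]
    {I : Ideal R} (hI : IsNilpotent I) (hM : Subsingleton ((R ⧸ I) ⊗[R] M)) :
    Subsingleton M := by
  have h_quot : Subsingleton (M ⧸ I • (⊤ : Submodule R M)) :=
    (TensorProduct.quotTensorEquivQuotSMul M I).symm.injective.subsingleton
  have hI_smul : I • (⊤ : Submodule R M) = ⊤ := Submodule.Quotient.subsingleton_iff.1 h_quot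
  have h_pow (n : ℕ) : I ^ n • (⊤ : Submodule R M) = ⊤ := by
    induction n with
    | zero => simp
    | succ n ih => rw [pow_succ, Submodule.mul_smul, hI_smul, ih]
  obtain ⟨n, hn⟩ := hI
  rw [← Submodule.subsingleton_iff R, ← subsingleton_iff_bot_eq_top, ← h_pow n, hn,
    Submodule.zero_eq_bot, Submodule.bot_smul]

lemma subsingleton_tensorProduct_quotient_range_of_isEpi {R B : Type*} [CommRing R] [CommRing B]
    [Algebra R B] [Algebra.IsEpi R B] :
    Subsingleton (B ⊗[R] (B ⧸ LinearMap.range (Algebra.linearMap R B))) := by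
  let π := (LinearMap.range (Algebra.linearMap R B)).mkQ
  have hπ_one : π 1 = 0 := (Submodule.Quotient.mk_eq_zero _).2 ⟨1, map_one (algebraMap R B)⟩
  have hπ : π.lTensor B = 0 := TensorProduct.ext' fun b c ↦ by
    have h_move : b ⊗ₜ[R] c = (b * c) ⊗ₜ[R] 1 := Algebra.IsEpi.injective_lift_mul (by simp)
    rw [h_move, LinearMap.lTensor_tmul, hπ_one, tmul_zero, LinearMap.zero_apply]
  have hπ_surj : Function.Surjective (π.lTensor B) :=
    LinearMap.lTensor_surjective B (Submodule.mkQ_surjective _)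
  rw [hπ] at hπ_surj
  exact subsingleton_of_forall_eq 0 fun x ↦ (hπ_surj x).choose_spec.symm

variable {A : Type*} [CommRing A] [IsNoetherianRing A] {p : Ideal A} [p.IsPrime]

lemma isNilpotent_maximalIdeal_of_mem_minimalPrimes (hp : p ∈ minimalPrimes A) :
    IsNilpotent (IsLocalRing.maximalIdeal (Localization.AtPrime p)) := by
  have : IsNoetherianRing (Localization.AtPrime p) :=
    IsLocalization.isNoetherianRing p.primeCompl _ inferInstance
  have : Ring.KrullDimLE 0 (Localization.AtPrime p) := .of_isLocalization _ hp _
  exact (isArtinianRing_iff_isNilpotent_maximalIdeal _).1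
    (isArtinianRing_iff_krullDimLE_zero.2 this)

lemma exists_notMem_smul_eq_zero {M : Type*} [AddCommGroup M] [Module A M]
    (hp : p ∈ minimalPrimes A) (hM : Subsingleton (p.ResidueField ⊗[A] M)) (m : M) :
    ∃ s ∉ p, s • m = 0 := by
  have h_residue : Subsingleton (p.ResidueField ⊗[Localization.AtPrime p]
      (Localization.AtPrime p ⊗[A] M)) :=
    (AlgebraTensorModule.cancelBaseChange A (Localization.AtPrime p) p.ResidueField
      p.ResidueField M).injective.subsingleton
  have h_loc : Subsingleton (Localization.AtPrime p ⊗[A] M) :=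
    subsingleton_of_isNilpotent (isNilpotent_maximalIdeal_of_mem_minimalPrimes hp) h_residue
  obtain ⟨s, hs⟩ := (IsLocalizedModule.eq_zero_iff p.primeCompl
    (TensorProduct.mk A (Localization.AtPrime p) M 1) (m := m)).1 (Subsingleton.elim _ _)
  exact ⟨s, s.2, hs⟩

variable {B : Type*} [CommRing B] [Algebra A B] [FaithfulSMul A B] [Algebra.IsEpi A B]

lemma exists_notMem_smul_mem_range_of_isEpi (hp : p ∈ minimalPrimes A) (b : B) :
    ∃ s ∉ p, s • b ∈ LinearMap.range (Algebra.linearMap A B) := by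
  let Q := B ⧸ LinearMap.range (Algebra.linearMap A B)
  have hBQ : Subsingleton (B ⊗[A] Q) := subsingleton_tensorProduct_quotient_range_of_isEpi
  have h_residue : Subsingleton ((p.ResidueField ⊗[A] B) ⊗[p.ResidueField]
      (p.ResidueField ⊗[A] Q)) :=
    (AlgebraTensorModule.distribBaseChange A p.ResidueField B Q).symm.injective.subsingleton
  have hB : Nontrivial (p.ResidueField ⊗[A] B) := by
    by_contra hB
    obtain ⟨s, hs, hs_one⟩ := exists_notMem_smul_eq_zero hp
      (not_nontrivial_iff_subsingleton.1 hB) 1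
    rw [← Algebra.algebraMap_eq_smul_one, FaithfulSMul.algebraMap_eq_zero_iff] at hs_one
    exact hs (hs_one ▸ p.zero_mem)
  have hQ : Subsingleton (p.ResidueField ⊗[A] Q) :=
    (Module.FaithfullyFlat.subsingleton_tensorProduct_iff_right p.ResidueField
      (p.ResidueField ⊗[A] B)).1 h_residue
  obtain ⟨s, hs, hsb⟩ := exists_notMem_smul_eq_zero hp hQ (Submodule.Quotient.mk b)
  exact ⟨s, hs, (Submodule.Quotient.mk_eq_zero _).1 hsb⟩

variable (A) in
theorem exists_ne_zero_forall_smul_mem_range_of_isEpi [Nontrivial A] (t : Finset B) :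
    ∃ s : A, s ≠ 0 ∧ ∀ b ∈ t, s • b ∈ LinearMap.range (Algebra.linearMap A B) := by
  obtain ⟨⟨p, hp⟩⟩ := Ideal.nonempty_minimalPrimes (bot_ne_top (α := Ideal A))
  have hp_prime : p.IsPrime := hp.1.1
  choose σ hσ hσ_range using fun b : B ↦ exists_notMem_smul_mem_range_of_isEpi hp b
  have h_prod : ∏ b ∈ t, σ b ∉ p := fun h_mem ↦
    have ⟨b, _, hb⟩ := (Ideal.IsPrime.prod_mem_iff (hp := hp_prime)).1 h_mem
    hσ b hb
  refine ⟨∏ b ∈ t, σ b, fun h_zero ↦ h_prod (h_zero ▸ p.zero_mem), fun b hb ↦ ?_⟩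
  obtain ⟨r, hr⟩ := Finset.dvd_prod_of_mem σ hb
  rw [hr, mul_comm, mul_smul]
  exact Submodule.smul_mem _ r (hσ_range b)

end MinimalPrime

section OneTensor

variable {R B C : Type*} [CommSemiring R] [Semiring B] [Algebra R B] [Semiring C] [Algebra R C]

lemma tmul_one_mul_mem_tensorSubmodule_top {Q : Submodule R C} {w : B ⊗[R] C}
    (hw : w ∈ tensorSubmodule ⊤ Q) (b : B) : b ⊗ₜ 1 * w ∈ tensorSubmodule ⊤ Q := by
  have h_le : tensorSubmodule ⊤ Q ≤
      (tensorSubmodule ⊤ Q).comap (LinearMap.mulLeft R (b ⊗ₜ[R] (1 : C))) :=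
    Submodule.map₂_le.2 fun m _ n hn ↦ by
      simpa using Submodule.apply_mem_map₂ (TensorProduct.mk R B C)
        (Submodule.mem_top (x := b * m)) hn
  exact h_le hw

lemma sliceLeft_mul_one_tmul (f : Module.Dual R B) (w : B ⊗[R] C) (c : C) :
    sliceLeft f (w * 1 ⊗ₜ c) = sliceLeft f w * c := by
  have h_comp : sliceLeft f ∘ₗ LinearMap.mulRight R ((1 : B) ⊗ₜ[R] c) =
      LinearMap.mulRight R c ∘ₗ sliceLeft f := by
    ext; simp
  exact LinearMap.congr_fun h_comp w

end OneTensor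

section Conductor

open HopfAlgebra (antipode)
open Algebra.TensorProduct (includeLeft)

lemma comul_mul_one_tmul_mem {R H : Type*} [CommSemiring R] [CommSemiring H]
    [HopfAlgebra R H] {U V : Submodule R H} (hU : IsLeftCoideal U) (hV : IsLeftCoideal V) {s c : H}
    (hs : s ∈ U / V) (hc : c ∈ V) :
    comul s * 1 ⊗ₜ[R] c ∈ tensorSubmodule ⊤ U := by
  have h_le : tensorSubmodule ⊤ V ≤ (tensorSubmodule ⊤ U).comap
      (LinearMap.mulLeft R (comul s) ∘ₗ LinearMap.mul' R (H ⊗[R] H) ∘ₗ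
        TensorProduct.map (includeLeft.toLinearMap ∘ₗ antipode R) comul) := by
    refine Submodule.map₂_le.2 fun a _ v hv ↦ ?_
    have h_mem := tmul_one_mul_mem_tensorSubmodule_top (hU (s * v) (hs v hv)) (antipode R a)
    rw [Bialgebra.comul_mul, mul_left_comm] at h_mem
    simpa using h_mem
  rw [one_tmul_eq_mul_antipode_comul]
  exact h_le (hV c hc)

variable {k H : Type*} [Field k] [CommRing H] [HopfAlgebra k H]

lemma IsLeftCoideal.div {U V : Submodule k H} (hU : IsLeftCoideal U) (hV : IsLeftCoideal V) :
    IsLeftCoideal (U / V) := fun s hs ↦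
  mem_tensorSubmodule_of_slice_mem (fun _ ↦ Submodule.mem_top) fun f c hc ↦ by
    rw [← sliceLeft_mul_one_tmul]
    exact sliceLeft_mem (comul_mul_one_tmul_mem hU hV hs hc) f

lemma one_mem_of_isLeftCoideal {A : Subalgebra k H} (hA : IsHopfSubalgebra A)
    {I : Submodule k H} (hI : IsLeftCoideal I) (hIA : I ≤ Subalgebra.toSubmodule A)
    (h_mul : ∀ a ∈ A, ∀ x ∈ I, a * x ∈ I) (hne : I ≠ ⊥) : 1 ∈ I := by
  obtain ⟨u, hu, hεu⟩ := hI.exists_counit_ne_zero hne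
  have h_comul : comul u ∈ tensorSubmodule (Subalgebra.toSubmodule A) I :=
    mem_tensorSubmodule_of_slice_mem (sliceRight_mem (hA.isSubcoalgebra u (hIA hu)))
      (sliceLeft_mem (hI u hu))
  have h_le : tensorSubmodule (Subalgebra.toSubmodule A) I ≤ I.comap
      (LinearMap.mul' k H ∘ₗ (antipode k).rTensor H) :=
    Submodule.map₂_le.2 fun a ha x hx ↦ by
      simpa using h_mul _ (hA.antipode_mem a ha) x hx
  have h_counit : algebraMap k H (counit u) ∈ I := by
    rw [← HopfAlgebra.mul_antipode_rTensor_comul_apply]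
    exact h_le h_comul
  rwa [Algebra.algebraMap_eq_smul_one, Submodule.smul_mem_iff _ hεu] at h_counit

theorem eq_top_of_isHopfSubalgebra {A : Subalgebra k H} [IsNoetherianRing A]
    (hA : IsHopfSubalgebra A) (hA_gen : RingHom.ker (Bialgebra.counitAlgHom k H) ≤
      Ideal.span {a | a ∈ A ∧ a ∈ RingHom.ker (Bialgebra.counitAlgHom k H)}) : A = ⊤ := by
  have : Nontrivial H := (Bialgebra.counitAlgHom k H).toRingHom.domain_nontrivial
  have : Algebra.IsEpi A H := isEpi_of_isLeftCoideal hA.isSubcoalgebra.isLeftCoideal hA_gen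
  refine top_unique fun b _ ↦ ?_
  obtain ⟨C, ⟨t, rfl⟩, hC_le, hC⟩ := exists_fg_isSubcoalgebra_ge (k := k)
    (Submodule.fg_span (Set.toFinite {1, b}))
  obtain ⟨h_one, hb⟩ := Set.pair_subset_iff.1 (Submodule.span_le.1 hC_le)
  set C := Submodule.span k (t : Set H)
  let I := Subalgebra.toSubmodule A / C
  have hI_mul : ∀ a ∈ A, ∀ x ∈ I, a * x ∈ I := fun a ha x hx c hc ↦ by
    rw [mul_assoc]
    exact A.mul_mem ha (hx c hc)
  have hIA : I ≤ Subalgebra.toSubmodule A := fun x hx ↦ by simpa using hx 1 h_one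
  have hI_ne_bot : I ≠ ⊥ := by
    obtain ⟨s, hs, hst⟩ := exists_ne_zero_forall_smul_mem_range_of_isEpi A t
    have h_le : C ≤ (Subalgebra.toSubmodule A).comap (LinearMap.mulLeft k (s : H)) :=
      Submodule.span_le.2 fun c hc ↦ by
        obtain ⟨a, ha⟩ := hst c hc
        have h_val : a = (s : H) * c := ha
        exact (h_val ▸ a.2 : (s : H) * c ∈ A)
    exact (Submodule.ne_bot_iff _).2 ⟨s, h_le, Subtype.coe_ne_coe.2 hs⟩
  have hI_one : 1 ∈ I :=
    one_mem_of_isLeftCoideal hA (hA.isSubcoalgebra.isLeftCoideal.div hC.isLeftCoideal) hIA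
      hI_mul hI_ne_bot
  exact Submodule.one_mem_div.1 hI_one hb

end Conductor

theorem commutative_hopf_algebra_affine_iff_noetherian_general
    (k : Type u) [Field k] (H : Type v) [CommRing H] [HopfAlgebra k H] :
    Algebra.FiniteType k H ↔ (RingHom.ker (Bialgebra.counitAlgHom k H)).FG := by
  refine ⟨fun _ ↦ ?_, fun ⟨t, ht⟩ ↦ ?_⟩
  · have : IsNoetherianRing H := Algebra.FiniteType.isNoetherianRing k H
    exact IsNoetherian.noetherian _
  · obtain ⟨A, hA_fg, htA, hA⟩ := exists_fg_isHopfSubalgebra_ge (k := k)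
      (Submodule.fg_span t.finite_toSet)
    have : Algebra.FiniteType k A := A.fg_iff_finiteType.1 hA_fg
    have : IsNoetherianRing A := Algebra.FiniteType.isNoetherianRing k A
    have hA_gen : RingHom.ker (Bialgebra.counitAlgHom k H) ≤
        Ideal.span {a | a ∈ A ∧ a ∈ RingHom.ker (Bialgebra.counitAlgHom k H)} :=
      ht.ge.trans (Ideal.span_mono fun x hx ↦
        ⟨htA (Submodule.subset_span hx), ht.le (Ideal.subset_span hx)⟩)
    have hA_top : A = ⊤ := eq_top_of_isHopfSubalgebra hA hA_gen
    exact ⟨hA_top ▸ hA_fg⟩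

theorem commutative_hopf_algebra_affine_iff_noetherian
    (k : Type u) [Field k] (H : Type v) [CommRing H] [HopfAlgebra k H] :
    Algebra.FiniteType k H ↔ IsNoetherianRing H :=
  ⟨fun _ ↦ Algebra.FiniteType.isNoetherianRing k H, fun _ ↦
    (commutative_hopf_algebra_affine_iff_noetherian_general k H).2 (IsNoetherian.noetherian _)⟩
end

section
/- Let k be an algebraically closed field of characteristic 0 and let H be a commutative affine Hopf algebra over k. Then H is regular; that is, H has finite global (projective) dimension. -/
open CategoryTheory

universe w v u u' u2

/-!
STATEMENT 7:
A commutative affine Hopf algebra over an algebraically closed field of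
characteristic 0 is regular, i.e. has finite global (projective) dimension.
Finiteness of the global dimension is expressed through the vanishing of all
Ext-groups above a uniform bound.
-/

/-! ### Ext groups over an arbitrary ring -/

instance hasExtModuleCat (R : Type u) [Ring R] :
    HasExt.{max u (v + 1)} (ModuleCat.{v} R) :=
  letI := HasDerivedCategory.standard (ModuleCat.{v} R)
  hasExt_of_hasDerivedCategory _

/-- The canonical map `(X ⟶ Y) → Ext X Y 0` is additive. -/
lemma Ext_mk₀_add {C : Type*} [Category C] [Abelian C] [HasExt.{w} C] {X Y : C}
    (f g : X ⟶ Y) :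
    Abelian.Ext.mk₀ (f + g) = Abelian.Ext.mk₀ f + Abelian.Ext.mk₀ g := by
  letI := HasDerivedCategory.standard C
  ext
  rw [Abelian.Ext.add_hom, Abelian.Ext.mk₀_hom, Abelian.Ext.mk₀_hom, Abelian.Ext.mk₀_hom,
    Functor.map_add]
  dsimp [ShiftedHom.mk₀]
  rw [Preadditive.add_comp]

/-- The Ext-group `Ext_A^i (M, N)` for two left `A`-modules `M` and `N`. -/
noncomputable abbrev ExtGroup (A : Type u) [Ring A]
    (M : Type v) [AddCommGroup M] [Module A M]
    (N : Type w) [AddCommGroup N] [Module A N] (i : ℕ) :=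
  Abelian.Ext (C := ModuleCat.{max v w u} A)
    (ModuleCat.of A (ULift.{max w u} M)) (ModuleCat.of A (ULift.{max v u} N)) i

/-- A ring has finite global dimension if there is a uniform bound above which all
Ext-groups vanish. -/
def HasFiniteGlobalDimension (A : Type u) [Ring A] : Prop :=
  ∃ n : ℕ, ∀ (M N : Type u) [AddCommGroup M] [Module A M] [AddCommGroup N] [Module A N],
    ∀ i : ℕ, n < i → Subsingleton (ExtGroup A M N i)

/-!
The enveloping algebra `Aᵉ = A ⊗[k] A` of an affine commutative `k`-algebra `A` is Noetherian, and
`A = Aᵉ ⧸ J` with `Ω[A⁄k] = J ⧸ J ^ 2`. If `Ω[A⁄k]` is free, lifts `y j ∈ J` of a basis and the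
derivations of `Aᵉ` that extend the dual derivations of `A` satisfy `D i (y j) ≡ δ i j` modulo `J`.
Locally these derivations can be corrected to `D i (y j) = δ i j`. In characteristic `0` this forces
the `y j` to be a regular sequence: if `x ^ (n + 1) * b = 0` and `D x = 1`, then
`(n + 1) * x ^ n * b = -x ^ (n + 1) * D b`, so an element killed by `x` lies in all powers of `x`.
As the `y j` locally generate `J`, the `Aᵉ`-module `A` has finite projective dimension. Tensoring an
`Aᵉ`-projective resolution of `A`, which splits over the right factor, with a module `M` then gives
the same bound for the projective dimension of `M`.

For a commutative Hopf algebra `H` over a field, `Ω[H⁄k]` is generated freely by invariant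
differential forms: the extension of scalars of the `k`-space of forms `S(h₁) dh₂` maps
isomorphically onto `Ω[H⁄k]`, with inverse `dh ↦ h₁ ⊗ S(h₂) dh₃`.
-/

/-! ### Regular sequences from derivations -/

section RegularSequence

open scoped Pointwise

variable {k R : Type*} [Field k] [CharZero k] [CommRing R] [Algebra k R]

lemma pow_dvd_of_mul_eq_zero_of_derivation_eq_one (D : Derivation k R R) {x a : R}
    (hD : D x = 1) (ha : x * a = 0) (n : ℕ) : x ^ n ∣ a := by
  suffices ∃ b, a = x ^ n * b ∧ x ^ (n + 1) * b = 0 from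
    let ⟨b, hb, _⟩ := this; ⟨b, hb⟩
  induction n with
  | zero => exact ⟨a, by simp, by simpa⟩
  | succ n ih =>
    obtain ⟨b, rfl, hb⟩ := ih
    have hn : ((n : k) + 1) ≠ 0 := Nat.cast_add_one_ne_zero n
    have hDb : ((n : k) + 1) • (x ^ n * b) + x ^ (n + 1) * D b = 0 := by
      have := congrArg D hb
      simp only [Derivation.leibniz, Derivation.leibniz_pow, hD, map_zero, smul_eq_mul,
        add_tsub_cancel_right, mul_one, nsmul_eq_mul] at this
      rw [← this, Algebra.smul_def]
      push_cast [map_add, map_natCast, map_one]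
      ring
    have hb' : x ^ n * b = x ^ (n + 1) * (-((n : k) + 1)⁻¹ • D b) := by
      rw [mul_smul_comm, neg_smul, ← smul_neg, eq_inv_smul_iff₀ hn]
      exact eq_neg_of_add_eq_zero_left hDb
    refine ⟨_, hb', ?_⟩
    rw [pow_succ', mul_assoc, ← hb', ← mul_assoc, ← pow_succ', hb]

lemma isSMulRegular_of_derivation_eq_one [IsNoetherianRing R] (D : Derivation k R R) {x : R}
    (hx : x ∈ Ideal.jacobson (⊥ : Ideal R)) (hD : D x = 1) : IsSMulRegular R x := by
  rw [isSMulRegular_iff_right_eq_zero_of_smul]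
  intro a ha
  have hI : Ideal.span {x} ≤ Ideal.jacobson ⊥ := (Ideal.span_singleton_le_iff_mem _).mpr hx
  have krull := Ideal.iInf_pow_smul_eq_bot_of_le_jacobson (M := R) (Ideal.span {x}) hI
  rw [← Submodule.mem_bot R, ← krull, Submodule.mem_iInf]
  intro n
  rw [smul_eq_mul, Ideal.mul_top, Ideal.span_singleton_pow, Ideal.mem_span_singleton]
  exact pow_dvd_of_mul_eq_zero_of_derivation_eq_one D hD ha n

lemma mk_mem_jacobson_bot (I : Ideal R) {x : R} (hx : x ∈ Ideal.jacobson (⊥ : Ideal R)) :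
    Ideal.Quotient.mk I x ∈ Ideal.jacobson (⊥ : Ideal (R ⧸ I)) := by
  have h := Ideal.map_jacobson_of_surjective (Ideal.Quotient.mk_surjective (I := I)) Ideal.mk_ker.le
  rw [Ideal.map_quotient_self] at h
  exact h ▸ Ideal.mem_map_of_mem _ (Ideal.jacobson_mono bot_le hx)

theorem isWeaklyRegular_ofFn_of_derivations [IsNoetherianRing R] {d : ℕ} (x : Fin d → R)
    (hx : ∀ j, x j ∈ Ideal.jacobson (⊥ : Ideal R)) (D : Fin d → Derivation k R R)
    (hD : ∀ i j, D i (x j) = if i = j then 1 else 0) :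
    RingTheory.Sequence.IsWeaklyRegular R (List.ofFn x) := by
  induction d generalizing R with
  | zero => simp
  | succ d ih =>
    let I : Ideal R := Ideal.span {x 0}
    have hD0 (i : Fin d) (a : R) (ha : a ∈ I) : D i.succ a ∈ I := by
      obtain ⟨b, rfl⟩ := Ideal.mem_span_singleton'.mp ha
      rw [Derivation.leibniz, hD, if_neg (Fin.succ_ne_zero i), smul_zero, zero_add, smul_eq_mul]
      exact Ideal.mul_mem_right _ _ (Ideal.mem_span_singleton_self _)
    have hmk : Function.Surjective (Ideal.Quotient.mkₐ k I) := Ideal.Quotient.mkₐ_surjective k I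
    let D' (i : Fin d) : Derivation k (R ⧸ I) (R ⧸ I) :=
      Derivation.liftOfSurjective (d := D i.succ) hmk fun a ha =>
        Ideal.Quotient.eq_zero_iff_mem.mpr (hD0 i a (Ideal.Quotient.eq_zero_iff_mem.mp ha))
    have hD' (i j : Fin d) : D' i (Ideal.Quotient.mk I (x j.succ)) = if i = j then 1 else 0 := by
      refine (Derivation.liftOfSurjective_apply hmk _ _).trans ?_
      rw [hD, apply_ite (Ideal.Quotient.mkₐ k I), map_one, map_zero]
      simp only [Fin.succ_inj]
    rw [List.ofFn_succ, RingTheory.Sequence.isWeaklyRegular_cons_iff']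
    refine ⟨isSMulRegular_of_derivation_eq_one (D 0) (hx 0) (by simp [hD]), ?_⟩
    have h := ih (fun j => Ideal.Quotient.mk I (x j.succ))
      (fun j => mk_mem_jacobson_bot I (hx j.succ)) D' hD'
    have hI : x 0 • (⊤ : Submodule R R) = I := by
      rw [← Submodule.ideal_span_singleton_smul, smul_eq_mul, Ideal.mul_top]
    rw [List.map_ofFn]
    refine (AddEquiv.isWeaklyRegular_congr
      (e := (Submodule.quotEquivOfEq _ _ hI).toAddEquiv) ?_).mpr h
    refine List.forall₂_same.mpr fun r _ y => ?_
    obtain ⟨r, rfl⟩ := Ideal.Quotient.mk_surjective r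
    obtain ⟨y, rfl⟩ := Submodule.Quotient.mk_surjective _ y
    rfl

end RegularSequence

section DualDerivations

variable {k R : Type*} [CommRing k] [CommRing R] [Algebra k R]

lemma exists_dual_derivations_of_isUnit_det {ι : Type*} [Fintype ι] [DecidableEq ι]
    (D : ι → Derivation k R R) (x : ι → R)
    (h : IsUnit (Matrix.of fun i j => D i (x j)).det) :
    ∃ E : ι → Derivation k R R, ∀ i j, E i (x j) = if i = j then 1 else 0 := by
  set J : Matrix ι ι R := Matrix.of fun i j => D i (x j)
  refine ⟨fun i => ∑ l, J⁻¹ i l • D l, fun i j => ?_⟩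
  rw [← Derivation.coeFnAddMonoidHom_apply, map_sum, Finset.sum_apply, ← Matrix.one_apply,
    ← Matrix.nonsing_inv_mul J h, Matrix.mul_apply]
  rfl

lemma exists_derivation_of_isLocalization (S : Submonoid R) (R' : Type*) [CommRing R']
    [Algebra k R'] [Algebra R R'] [IsScalarTower k R R'] [IsLocalization S R']
    (D : Derivation k R R) :
    ∃ D' : Derivation k R' R', ∀ a, D' (algebraMap R R' a) = algebraMap R R' (D a) := by
  have := KaehlerDifferential.isLocalizedModule_map k R R' S
  let f : Ω[R'⁄k] →ₗ[R] R' := IsLocalizedModule.lift S (KaehlerDifferential.map k k R R')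
    (Algebra.linearMap R R' ∘ₗ D.liftKaehlerDifferential)
    (IsLocalizedModule.map_units (Algebra.linearMap R R'))
  have hf (ω : Ω[R⁄k]) :
      f (KaehlerDifferential.map k k R R' ω) = algebraMap R R' (D.liftKaehlerDifferential ω) :=
    IsLocalizedModule.lift_apply ..
  refine ⟨(f.extendScalarsOfIsLocalization S R').compDer (KaehlerDifferential.D k R'), fun a => ?_⟩
  simpa using hf (KaehlerDifferential.D k R a)

lemma isUnit_det_of_sub_one_mem [IsLocalRing R] {ι : Type*} [Fintype ι] [DecidableEq ι]
    {J : Ideal R} (hJ : J ≠ ⊤) (A : Matrix ι ι R) (hA : ∀ i j, A i j - (1 : Matrix ι ι R) i j ∈ J) :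
    IsUnit A.det := by
  have := Ideal.Quotient.nontrivial_iff.mpr hJ
  have := IsLocalHom.of_surjective (Ideal.Quotient.mk J) Ideal.Quotient.mk_surjective
  have hA' : (Ideal.Quotient.mk J).mapMatrix A = 1 := by
    rw [← map_one (Ideal.Quotient.mk J).mapMatrix]
    ext i j
    exact Ideal.Quotient.eq.mpr (hA i j)
  refine isUnit_of_map_unit (Ideal.Quotient.mk J) _ ?_
  rw [RingHom.map_det, hA', Matrix.det_one]
  exact isUnit_one

end DualDerivations

/-! ### Quotients by ideals with dual derivations -/

section Quotient

variable {R : Type u} [CommRing R]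

lemma hasProjectiveDimensionLE_quotient_ofList [IsLocalRing R] [IsNoetherianRing R] {rs : List R}
    (reg : RingTheory.Sequence.IsWeaklyRegular R rs)
    (mem : ∀ r ∈ rs, r ∈ IsLocalRing.maximalIdeal R) :
    HasProjectiveDimensionLE (ModuleCat.of.{u} R (R ⧸ Ideal.ofList rs)) rs.length := by
  have h := ModuleCat.projectiveDimension_quotient_eq_add_length_of_isWeaklyRegular
    (ModuleCat.of.{u} R R) rs reg mem
  rw [ModuleCat.projectiveDimension_eq_zero_of_projective (ModuleCat.of.{u} R R), zero_add] at h
  rw [← projectiveDimension_le_iff, ← Ideal.mul_top (Ideal.ofList rs)]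
  exact h.le

lemma span_eq_of_le_span_sup_sq [IsNoetherianRing R] {J : Ideal R} {s : Set R}
    (hJ : J ≤ Ideal.jacobson ⊥) (hs : s ⊆ J) (h : J ≤ Ideal.span s ⊔ J ^ 2) : Ideal.span s = J :=
  le_antisymm (Ideal.span_le.mpr hs) <|
    Submodule.le_of_le_smul_of_le_jacobson_bot J.fg_of_isNoetherianRing hJ
      (by rwa [smul_eq_mul, ← sq])

variable {k : Type*} [Field k] [CharZero k] [Algebra k R]

theorem hasProjectiveDimensionLE_quotient_of_isLocalRing [IsLocalRing R] [IsNoetherianRing R]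
    {J : Ideal R} {d : ℕ} (y : Fin d → R) (hy : ∀ j, y j ∈ J)
    (hspan : J ≤ Ideal.span (Set.range y) ⊔ J ^ 2) (D : Fin d → Derivation k R R)
    (hD : ∀ i j, D i (y j) - (1 : Matrix (Fin d) (Fin d) R) i j ∈ J) :
    HasProjectiveDimensionLE (ModuleCat.of.{u} R (R ⧸ J)) d := by
  obtain rfl | hJ := eq_or_ne J ⊤
  · have : Subsingleton (ModuleCat.of.{u} R (R ⧸ (⊤ : Ideal R))) :=
      Ideal.Quotient.subsingleton_iff.mpr rfl
    have := (ModuleCat.isZero_of_subsingleton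
      (ModuleCat.of.{u} R (R ⧸ (⊤ : Ideal R)))).hasProjectiveDimensionLT_zero
    exact hasProjectiveDimensionLT_of_ge _ 0 (d + 1) (Nat.zero_le _)
  have hmax : J ≤ IsLocalRing.maximalIdeal R := IsLocalRing.le_maximalIdeal hJ
  have hjac : J ≤ Ideal.jacobson ⊥ := hmax.trans (IsLocalRing.maximalIdeal_le_jacobson ⊥)
  obtain ⟨E, hE⟩ := exists_dual_derivations_of_isUnit_det D y (isUnit_det_of_sub_one_mem hJ _ hD)
  have hreg := isWeaklyRegular_ofFn_of_derivations y (fun j => hjac (hy j)) E hE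
  have hJy : Ideal.ofList (List.ofFn y) = J := by
    rw [← span_eq_of_le_span_sup_sq hjac (Set.range_subset_iff.mpr hy) hspan, Ideal.ofList]
    simp only [List.mem_ofFn, Set.range]
  have hpd := hasProjectiveDimensionLE_quotient_ofList hreg fun r hr => by
    obtain ⟨j, rfl⟩ := List.mem_ofFn.mp hr
    exact hmax (hy j)
  rwa [hJy, List.length_ofFn] at hpd

lemma hasProjectiveDimensionLE_localizedModule {S : Submonoid R} {X : ModuleCat.{u} R}
    {Q : Type u} [AddCommGroup Q] [Module R Q] [Module (Localization S) Q]
    [IsScalarTower R (Localization S) Q] (f : X →ₗ[R] Q) [IsLocalizedModule S f] (n : ℕ)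
    [HasProjectiveDimensionLE (ModuleCat.of.{u} (Localization S) Q) n] :
    HasProjectiveDimensionLE (X.localizedModule S) n :=
  let e := IsLocalizedModule.linearEquiv S f (X.localizedModuleMkLinearMap S)
  ModuleCat.hasProjectiveDimensionLE_of_linearEquiv (M := ModuleCat.of.{u} (Localization S) Q)
    (e.extendScalarsOfIsLocalization S (Localization S)) n

lemma hasProjectiveDimensionLE_localizedModule_quotient (S : Submonoid R) (J : Ideal R) (n : ℕ)
    (h : HasProjectiveDimensionLE (ModuleCat.of.{u} (Localization S)
      (Localization S ⧸ J.map (algebraMap R (Localization S)))) n) :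
    HasProjectiveDimensionLE ((ModuleCat.of.{u} R (R ⧸ J)).localizedModule S) n := by
  rw [← Ideal.localized'_eq_map (Localization S) S] at h
  exact hasProjectiveDimensionLE_localizedModule (X := ModuleCat.of.{u} R (R ⧸ J))
    (J.toLocalizedQuotient' (Localization S) S (Algebra.linearMap R (Localization S))) n

theorem hasProjectiveDimensionLE_quotient_of_derivations [IsNoetherianRing R]
    {J : Ideal R} {d : ℕ} (y : Fin d → R) (hy : ∀ j, y j ∈ J)
    (hspan : J ≤ Ideal.span (Set.range y) ⊔ J ^ 2) (D : Fin d → Derivation k R R)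
    (hD : ∀ i j, D i (y j) - (1 : Matrix (Fin d) (Fin d) R) i j ∈ J) :
    HasProjectiveDimensionLE (ModuleCat.of.{u} R (R ⧸ J)) d := by
  refine (ModuleCat.hasProjectiveDimensionLE_iff_forall_maximalSpectrum d _).mpr fun n => ?_
  let R' := Localization n.1.primeCompl
  have : IsLocalRing R' := Localization.AtPrime.isLocalRing n.1
  have : IsNoetherianRing R' := IsLocalization.isNoetherianRing n.1.primeCompl R' inferInstance
  choose D' hD' using fun i => exists_derivation_of_isLocalization n.1.primeCompl R' (D i)
  refine hasProjectiveDimensionLE_localizedModule_quotient _ _ _ <|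
    hasProjectiveDimensionLE_quotient_of_isLocalRing (fun j => algebraMap R R' (y j))
      (fun j => Ideal.mem_map_of_mem _ (hy j)) ?_ D' fun i j => ?_
  · have := Ideal.map_mono (f := algebraMap R R') hspan
    rwa [Ideal.map_sup, Ideal.map_pow, Ideal.map_span, ← Set.range_comp] at this
  · have := Ideal.mem_map_of_mem (algebraMap R R') (hD i j)
    rwa [map_sub, ← hD', Matrix.one_apply, apply_ite (algebraMap R R'), map_one, map_zero,
      ← Matrix.one_apply] at this

end Quotient

/-! ### Projective dimension and change of rings -/

section ChangeOfRings

open TensorProduct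

lemma hasProjectiveDimensionLE_succ_iff_of_exact {R : Type u} [CommRing R] {K P X : Type u}
    [AddCommGroup K] [AddCommGroup P] [AddCommGroup X] [Module R K] [Module R P] [Module R X]
    [Module.Projective R P] {f : K →ₗ[R] P} {g : P →ₗ[R] X} (hf : Function.Injective f)
    (hfg : Function.Exact f g) (hg : Function.Surjective g) (n : ℕ) :
    HasProjectiveDimensionLE (ModuleCat.of.{u} R X) (n + 1) ↔
      HasProjectiveDimensionLE (ModuleCat.of.{u} R K) n := by
  let S : ShortComplex (ModuleCat.{u} R) :=
    ShortComplex.mk (ModuleCat.ofHom f) (ModuleCat.ofHom g)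
      (by ext x; exact hfg.apply_apply_eq_zero x)
  have hS : S.ShortExact :=
    { exact := (ShortComplex.ShortExact.moduleCat_exact_iff_function_exact S).mpr hfg
      mono_f := (ModuleCat.mono_iff_injective _).mpr hf
      epi_g := (ModuleCat.epi_iff_surjective _).mpr hg }
  exact hS.hasProjectiveDimensionLT_X₃_iff n ((IsProjective.iff_projective P).mp inferInstance)

lemma projective_finsupp {R : Type*} [CommRing R] (ι N : Type*) [AddCommGroup N] [Module R N]
    [Module.Projective R N] : Module.Projective R (ι →₀ N) := by
  classical
  exact .of_equiv (finsuppLequivDFinsupp (ι := ι) (M := N) R).symm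

lemma exists_retraction_ker_of_projective {R N P : Type*} [CommRing R] [AddCommGroup N]
    [AddCommGroup P] [Module R N] [Module R P] [Module.Projective R P] {g : N →ₗ[R] P}
    (hg : Function.Surjective g) :
    ∃ r : N →ₗ[R] LinearMap.ker g, r ∘ₗ (LinearMap.ker g).subtype = .id := by
  have hex := LinearMap.exact_subtype_ker_map g
  obtain ⟨s, hs⟩ := Module.projective_lifting_property g .id hg
  exact ⟨_, ((hex.splitInjectiveEquiv hg).symm
    (hex.splitSurjectiveEquiv (LinearMap.ker g).subtype_injective ⟨s, hs⟩)).2⟩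

variable {A B C : Type u} [CommRing A] [CommRing B] [CommRing C] [Algebra A C] [Algebra B C]
  (X : Type u) [AddCommGroup X] [Module A X] [Module B X] [Module C X] [IsScalarTower A C X]
  [IsScalarTower B C X] [SMulCommClass B A X] (M : Type u) [AddCommGroup M] [Module B M]

lemma projective_tensorProduct_of_projective [Module.Projective A (C ⊗[B] M)]
    [Module.Projective C X] : Module.Projective A (X ⊗[B] M) := by
  obtain ⟨s, hs⟩ := Module.projective_def'.mp (inferInstance : Module.Projective C X)
  have := projective_finsupp (R := A) X (C ⊗[B] M)
  classical
  have : Module.Projective A ((X →₀ C) ⊗[B] M) :=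
    .of_equiv ((finsuppLeft B C C M X).restrictScalars A).symm
  refine .of_split ((AlgebraTensorModule.rTensor B M s).restrictScalars A)
    ((AlgebraTensorModule.rTensor B M (Finsupp.linearCombination C id)).restrictScalars A) ?_
  ext t
  change (AlgebraTensorModule.rTensor B M _ ∘ₗ AlgebraTensorModule.rTensor B M s) t = t
  rw [← AlgebraTensorModule.rTensor_comp, hs, AlgebraTensorModule.rTensor_id, LinearMap.id_apply]

variable {X} in
lemma hasProjectiveDimensionLE_succ_tensorProduct_of_exact {K P : Type u}
    [AddCommGroup K] [Module A K] [Module B K] [Module C K] [IsScalarTower A C K]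
    [IsScalarTower B C K] [SMulCommClass B A K]
    [AddCommGroup P] [Module A P] [Module B P] [Module C P] [IsScalarTower A C P]
    [IsScalarTower B C P] [SMulCommClass B A P] [Module.Projective A (P ⊗[B] M)]
    {f : K →ₗ[C] P} {g : P →ₗ[C] X} {r : P →ₗ[B] K} (hr : r ∘ₗ f.restrictScalars B = .id)
    (hfg : Function.Exact f g) (hg : Function.Surjective g) {n : ℕ}
    (h : HasProjectiveDimensionLE (ModuleCat.of.{u} A (K ⊗[B] M)) n) :
    HasProjectiveDimensionLE (ModuleCat.of.{u} A (X ⊗[B] M)) (n + 1) := by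
  have hinj : Function.Injective (AlgebraTensorModule.rTensor B M f) := by
    have hrf : r.rTensor M ∘ₗ (f.restrictScalars B).rTensor M = .id := by
      rw [← LinearMap.rTensor_comp, hr, LinearMap.rTensor_id]
    exact Function.LeftInverse.injective (LinearMap.congr_fun hrf)
  exact (hasProjectiveDimensionLE_succ_iff_of_exact
    (f := (AlgebraTensorModule.rTensor B M f).restrictScalars A)
    (g := (AlgebraTensorModule.rTensor B M g).restrictScalars A) hinj
    (rTensor_exact M (f := f.restrictScalars B) (g := g.restrictScalars B) hfg hg)
    (LinearMap.rTensor_surjective M (g := g.restrictScalars B) hg) n).mpr h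

theorem hasProjectiveDimensionLE_tensorProduct [Module.Projective B C]
    [Module.Projective A (C ⊗[B] M)] [Module.Projective B X] (n : ℕ)
    (h : HasProjectiveDimensionLE (ModuleCat.of.{u} C X) n) :
    HasProjectiveDimensionLE (ModuleCat.of.{u} A (X ⊗[B] M)) n := by
  induction n generalizing X with
  | zero =>
    have : Module.Projective C X := (IsProjective.iff_projective X).mpr
      ((projective_iff_hasProjectiveDimensionLE_zero _).mpr h)
    exact (projective_iff_hasProjectiveDimensionLE_zero _).mp <|
      (IsProjective.iff_projective _).mp (projective_tensorProduct_of_projective (C := C) X M)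
  | succ n ih =>
    let p : (X →₀ C) →ₗ[C] X := Finsupp.linearCombination C id
    have hp : Function.Surjective p := Finsupp.linearCombination_id_surjective C X
    have := projective_finsupp (R := B) X C
    obtain ⟨r, hr⟩ := exists_retraction_ker_of_projective (g := p.restrictScalars B) hp
    let K := LinearMap.ker p
    have : Module.Projective B K := .of_split (K.subtype.restrictScalars B) r hr
    have : SMulCommClass B A K := ⟨fun b a x => Subtype.ext (smul_comm b a x.1)⟩
    have hK : HasProjectiveDimensionLE (ModuleCat.of.{u} C K) n :=
      (hasProjectiveDimensionLE_succ_iff_of_exact K.subtype_injective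
        (LinearMap.exact_subtype_ker_map p) hp n).mp h
    have := projective_tensorProduct_of_projective (A := A) (B := B) (C := C) (X →₀ C) M
    exact hasProjectiveDimensionLE_succ_tensorProduct_of_exact (K := K) M hr
      (LinearMap.exact_subtype_ker_map p) hp (ih K hK)

variable {k : Type*} [Field k]

lemma hasProjectiveDimensionLE_tensorProduct_of_isPushout {A B C : Type u} [CommRing A] [CommRing B]
    [CommRing C] [Algebra k A] [Algebra k B] [Algebra k C] [Algebra A C] [algebraBC : Algebra B C]
    [IsScalarTower k A C] [IsScalarTower k B C] [Algebra.IsPushout k A B C]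
    (X : Type u) [AddCommGroup X] [Module A X] [Module B X] [Module C X] [IsScalarTower A C X]
    [IsScalarTower B C X] [SMulCommClass B A X]
    (M : Type u) [AddCommGroup M] [Module k M] [Module B M] [IsScalarTower k B M]
    [Module.Projective B X] {n : ℕ} (h : HasProjectiveDimensionLE (ModuleCat.of.{u} C X) n) :
    HasProjectiveDimensionLE (ModuleCat.of.{u} A (X ⊗[B] M)) n := by
  have : Module.Projective B C :=
    have : Algebra.IsPushout k B A C := .symm inferInstance
    .of_equiv (Algebra.IsPushout.equiv k B A C).toLinearEquiv
  have : Module.Projective A (C ⊗[B] M) :=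
    .of_equiv (Algebra.IsPushout.cancelBaseChange k A B C M).symm
  exact hasProjectiveDimensionLE_tensorProduct X M n h

theorem hasProjectiveDimensionLE_of_tensorProduct_quotient_ideal {A : Type u} [CommRing A]
    [Algebra k A] {n : ℕ} (h : HasProjectiveDimensionLE
      (ModuleCat.of.{u} (A ⊗[k] A) (A ⊗[k] A ⧸ KaehlerDifferential.ideal k A)) n)
    (M : Type u) [AddCommGroup M] [Module A M] :
    HasProjectiveDimensionLE (ModuleCat.of.{u} A M) n := by
  let _ : Module k M := Module.compHom M (algebraMap k A)
  have : IsScalarTower k A M := .of_compHom k A M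
  let _ : Algebra (A ⊗[k] A) A := (Algebra.TensorProduct.lmul' k (S := A)).toAlgebra
  have : IsScalarTower A (A ⊗[k] A) A := .of_algebraMap_eq fun a => by
    simp [RingHom.algebraMap_toAlgebra]
  -- The default `A`-algebra structure on `A ⊗[k] A` is the left one; here it is the right one.
  have : @IsScalarTower A (A ⊗[k] A) A Algebra.TensorProduct.rightAlgebra.toSMul _ _ :=
    letI : Algebra A (A ⊗[k] A) := Algebra.TensorProduct.rightAlgebra
    .of_algebraMap_eq fun a => by simp [RingHom.algebraMap_toAlgebra]
  have hmul : Function.Surjective (Algebra.linearMap (A ⊗[k] A) A) := fun a =>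
    ⟨a ⊗ₜ 1, by simp [RingHom.algebraMap_toAlgebra]⟩
  have hker : KaehlerDifferential.ideal k A =
      LinearMap.ker (Algebra.linearMap (A ⊗[k] A) A) := rfl
  have hA : HasProjectiveDimensionLE (ModuleCat.of.{u} (A ⊗[k] A) A) n :=
    ModuleCat.hasProjectiveDimensionLE_of_linearEquiv
      (M := ModuleCat.of.{u} (A ⊗[k] A) (A ⊗[k] A ⧸ KaehlerDifferential.ideal k A))
      (Submodule.quotEquivOfEq _ _ hker ≪≫ₗ LinearMap.quotKerEquivOfSurjective _ hmul) n
  have := hasProjectiveDimensionLE_tensorProduct_of_isPushout (k := k) (A := A) (B := A)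
    (C := A ⊗[k] A) (algebraBC := Algebra.TensorProduct.rightAlgebra) A M hA
  exact ModuleCat.hasProjectiveDimensionLE_of_linearEquiv (M := ModuleCat.of.{u} A (A ⊗[A] M))
    (TensorProduct.lid A M) n

end ChangeOfRings

/-! ### Algebras with free Kähler differentials -/

section FreeKaehlerDifferential

open TensorProduct

lemma le_span_sup_sq_of_span_toCotangent_eq_top {R ι : Type*} [CommRing R] {J : Ideal R}
    (y : ι → J) (h : Submodule.span R (Set.range fun j => J.toCotangent (y j)) = ⊤) :
    J ≤ Ideal.span (Set.range fun j => (y j : R)) ⊔ J ^ 2 := by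
  intro x hx
  have hxy : J.toCotangent ⟨x, hx⟩ ∈ (Submodule.span R (Set.range y)).map J.toCotangent := by
    rw [Submodule.map_span, ← Set.range_comp]
    exact h ▸ Submodule.mem_top
  obtain ⟨z, hz, hzx⟩ := hxy
  have hz' : (z : R) ∈ Ideal.span (Set.range fun j => (y j : R)) := by
    have := Submodule.mem_map_of_mem (f := J.subtype) hz
    rwa [Submodule.map_span, ← Set.range_comp] at this
  exact sub_add_cancel x (z : R) ▸ add_comm (z : R) _ ▸
    Submodule.add_mem_sup hz' (J.toCotangent_eq.mp hzx.symm)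

variable {k A : Type*} [CommRing k] [CommRing A] [Algebra k A]

lemma exists_derivation_lTensor (B : Type*) [CommRing B] [Algebra k B] (D : Derivation k A A) :
    ∃ E : Derivation k (B ⊗[k] A) (B ⊗[k] A), ∀ b a, E (b ⊗ₜ a) = b ⊗ₜ D a := by
  refine ⟨.mk' (D.toLinearMap.lTensor B) fun x y => ?_, fun b a => rfl⟩
  induction x with
  | zero => simp
  | add x x' hx hx' => rw [add_mul, map_add, hx, hx', map_add, add_smul, smul_add]; abel
  | tmul b a =>
    induction y with
    | zero => simp
    | add y y' hy hy' => rw [mul_add, map_add, hy, hy', map_add, add_smul, smul_add]; abel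
    | tmul b' a' => simp [tmul_add, mul_comm b b']

lemma exists_derivation_lmul'_eq_tensorProductTo (D : Derivation k A A) :
    ∃ E : Derivation k (A ⊗[k] A) (A ⊗[k] A),
      ∀ x, Algebra.TensorProduct.lmul' k (E x) = D.tensorProductTo x := by
  obtain ⟨E, hE⟩ := exists_derivation_lTensor A D
  refine ⟨E, fun x => ?_⟩
  induction x with
  | zero => simp
  | add x y hx hy => rw [map_add, map_add, hx, hy, map_add]
  | tmul a b => rw [hE, Algebra.TensorProduct.lmul'_apply_tmul, D.tensorProductTo_tmul, smul_eq_mul]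

lemma exists_dual_derivations_of_basis_kaehlerDifferential {ι : Type*} [DecidableEq ι]
    (b : Module.Basis ι A Ω[A⁄k]) :
    ∃ (y : ι → KaehlerDifferential.ideal k A) (E : ι → Derivation k (A ⊗[k] A) (A ⊗[k] A)),
      KaehlerDifferential.ideal k A ≤ Ideal.span (Set.range fun j => (y j : A ⊗[k] A)) ⊔
        KaehlerDifferential.ideal k A ^ 2 ∧
      ∀ i j, E i (y j) - (1 : Matrix ι ι (A ⊗[k] A)) i j ∈ KaehlerDifferential.ideal k A := by
  let D (i : ι) : Derivation k A A := (b.coord i).compDer (KaehlerDifferential.D k A)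
  choose y hy using fun j => (KaehlerDifferential.ideal k A).toCotangent_surjective (b j)
  choose E hE using fun i => exists_derivation_lmul'_eq_tensorProductTo (D i)
  refine ⟨y, E, le_span_sup_sq_of_span_toCotangent_eq_top y ?_, fun i j => ?_⟩
  · refine Submodule.eq_top_iff'.mpr fun ω => ?_
    have := Submodule.span_le_restrictScalars A (A ⊗[k] A) (Set.range b) (b.mem_span ω)
    rwa [← funext hy] at this
  · have hD : (D i).tensorProductTo (y j) = (1 : Matrix ι ι A) i j :=
      calc (D i).tensorProductTo (y j)
        _ = b.coord i ((KaehlerDifferential.ideal k A).toCotangent (y j)) :=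
          LinearMap.congr_fun ((KaehlerDifferential.linearMapEquivDerivation k A).left_inv
            (b.coord i)) ((KaehlerDifferential.ideal k A).toCotangent (y j))
        _ = b.coord i (b j) := congrArg _ (hy j)
        _ = (1 : Matrix ι ι A) i j := by
          simp [Matrix.one_apply, Finsupp.single_apply, eq_comm]
    rw [RingHom.mem_ker, map_sub, hE, hD, Matrix.one_apply, Matrix.one_apply,
      apply_ite (Algebra.TensorProduct.lmul' k), map_one, map_zero, sub_self]

theorem exists_hasProjectiveDimensionLE_tensorProduct_quotient_ideal (k : Type*) [Field k]
    [CharZero k] (A : Type u) [CommRing A] [Algebra k A] [Algebra.FiniteType k A]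
    [Module.Free A Ω[A⁄k]] :
    ∃ d, HasProjectiveDimensionLE
      (ModuleCat.of.{u} (A ⊗[k] A) (A ⊗[k] A ⧸ KaehlerDifferential.ideal k A)) d := by
  have : Algebra.FiniteType k (A ⊗[k] A) := .trans ‹_› (Algebra.FiniteType.baseChange A)
  have : IsNoetherianRing (A ⊗[k] A) := Algebra.FiniteType.isNoetherianRing k _
  obtain ⟨d, ⟨b⟩⟩ : ∃ d, Nonempty (Module.Basis (Fin d) A Ω[A⁄k]) :=
    ⟨_, ⟨(Module.Free.chooseBasis A Ω[A⁄k]).reindex (Fintype.equivFin _)⟩⟩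
  obtain ⟨y, E, hspan, hE⟩ := exists_dual_derivations_of_basis_kaehlerDifferential b
  exact ⟨d, hasProjectiveDimensionLE_quotient_of_derivations _ (fun j => (y j).2) hspan E hE⟩

theorem hasFiniteGlobalDimension_of_free_kaehlerDifferential (k : Type*) [Field k] [CharZero k]
    (A : Type u) [CommRing A] [Algebra k A] [Algebra.FiniteType k A] [Module.Free A Ω[A⁄k]] :
    HasFiniteGlobalDimension A := by
  obtain ⟨d, hd⟩ := exists_hasProjectiveDimensionLE_tensorProduct_quotient_ideal k A
  refine ⟨d, fun M N _ _ _ _ i hi => ?_⟩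
  have hM := hasProjectiveDimensionLE_of_tensorProduct_quotient_ideal hd (ULift.{u} M)
  exact hM.subsingleton _ (d + 1) i hi _

end FreeKaehlerDifferential

/-! ### Invariant differential forms -/

section InvariantForms

open TensorProduct

variable {k H : Type*} [CommRing k] [CommRing H]

section Bialgebra

variable [Bialgebra k H]

lemma apply_comul_eq_one_tmul_of_convolution {f g : H →ₗ[k] H}
    (hfg : LinearMap.mul' k H ∘ₗ TensorProduct.map f g ∘ₗ Coalgebra.comul =
      Algebra.linearMap k H ∘ₗ Coalgebra.counit) {Q : H ⊗[k] H →ₗ[k] H ⊗[k] H}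
    (hQ : ∀ a b, Q (a ⊗ₜ b) = (f a ⊗ₜ 1) * g.rTensor H (Coalgebra.comul b)) (h : H) :
    Q (Coalgebra.comul h) = 1 ⊗ₜ h := by
  have hQ' : Q = (LinearMap.mul' k H ∘ₗ TensorProduct.map f g).rTensor H ∘ₗ
      (TensorProduct.assoc k H H H).symm.toLinearMap ∘ₗ Coalgebra.comul.lTensor H := by
    ext a b
    suffices ∀ w : H ⊗[k] H, (f a ⊗ₜ 1) * g.rTensor H w =
        (LinearMap.mul' k H ∘ₗ TensorProduct.map f g).rTensor H
          ((TensorProduct.assoc k H H H).symm (a ⊗ₜ w)) from (hQ a b).trans (this _)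
    intro w
    induction w with
    | zero => simp
    | add x y hx hy => rw [map_add, mul_add, hx, hy, tmul_add, map_add, map_add]
    | tmul x y => simp
  calc Q (Coalgebra.comul h)
    _ = (LinearMap.mul' k H ∘ₗ TensorProduct.map f g ∘ₗ Coalgebra.comul).rTensor H
          (Coalgebra.comul h) := by
      rw [hQ', LinearMap.comp_apply, LinearMap.comp_apply, LinearEquiv.coe_coe,
        Coalgebra.coassoc_symm_apply, ← LinearMap.rTensor_comp_apply, LinearMap.comp_assoc]
    _ = 1 ⊗ₜ h := by
      rw [hfg, LinearMap.rTensor_comp_apply, Coalgebra.rTensor_counit_comul]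
      simp

lemma exists_derivation_lTensor_comul {V : Type*} [AddCommGroup V] [Module k V] (φ : H →ₗ[k] V)
    (hφ : ∀ a b, φ (a * b) =
      Coalgebra.counit (R := k) a • φ b + Coalgebra.counit (R := k) b • φ a) :
    ∃ D : Derivation k H (H ⊗[k] V), ∀ h, D h = φ.lTensor H (Coalgebra.comul h) := by
  let c : H ⊗[k] H →ₗ[k] H := (TensorProduct.rid k H).toLinearMap ∘ₗ Coalgebra.counit.lTensor H
  have hc (h : H) : c (Coalgebra.comul h) = h := by simp [c]
  have hmul (x y : H ⊗[k] H) :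
      φ.lTensor H (x * y) = c x • φ.lTensor H y + c y • φ.lTensor H x := by
    induction x with
    | zero => simp
    | add x x' hx hx' => rw [add_mul, map_add, map_add, map_add, hx, hx', add_smul, smul_add]; abel
    | tmul a b =>
      induction y with
      | zero => simp
      | add y y' hy hy' =>
        rw [mul_add, map_add, map_add, map_add, hy, hy', add_smul, smul_add]; abel
      | tmul a' b' => simp [c, hφ, tmul_add, smul_tmul', mul_comm a a']
  refine ⟨.mk' (φ.lTensor H ∘ₗ Coalgebra.comul) fun a b => ?_, fun h => rfl⟩
  simp only [LinearMap.comp_apply, Bialgebra.comul_mul, hmul, hc]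

end Bialgebra

variable (k H) [HopfAlgebra k H]

/-- The algebra map `h ↦ S(h₁) ⊗ h₂`. Its extension `a ⊗ h ↦ a S(h₁) ⊗ h₂` to `H ⊗[k] H` is inverse
to the shear map `a ⊗ h ↦ a h₁ ⊗ h₂`. -/
noncomputable def antipodeComul : H →ₐ[k] H ⊗[k] H :=
  (Algebra.TensorProduct.map (HopfAlgebra.antipodeAlgHom k H) (.id k H)).comp
    (Bialgebra.comulAlgHom k H)

/-- The Maurer–Cartan map `h ↦ S(h₁) dh₂`. Its values are the invariant differential forms, which
generate `Ω[H⁄k]` freely. -/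
noncomputable def maurerCartan : H →ₗ[k] Ω[H⁄k] :=
  (KaehlerDifferential.D k H).tensorProductTo.restrictScalars k ∘ₗ (antipodeComul k H).toLinearMap

variable {k H}

lemma antipodeComul_apply (h : H) : antipodeComul k H h =
    (HopfAlgebra.antipode k (A := H)).rTensor H (Coalgebra.comul h) := rfl

lemma lmul'_antipodeComul (h : H) : Algebra.TensorProduct.lmul' k (antipodeComul k H h) =
    algebraMap k H (Coalgebra.counit h) :=
  HopfAlgebra.mul_antipode_rTensor_comul_apply h

lemma maurerCartan_apply (h : H) :
    maurerCartan k H h = (KaehlerDifferential.D k H).tensorProductTo (antipodeComul k H h) := rfl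

lemma maurerCartan_mul (a b : H) : maurerCartan k H (a * b) =
    Coalgebra.counit (R := k) a • maurerCartan k H b +
      Coalgebra.counit (R := k) b • maurerCartan k H a := by
  simp only [maurerCartan_apply, map_mul, Derivation.tensorProductTo_mul, lmul'_antipodeComul,
    algebraMap_smul]

lemma liftBaseChange_maurerCartan_comul (h : H) :
    (maurerCartan k H).liftBaseChange H (Coalgebra.comul (R := k) h) =
      KaehlerDifferential.D k H h := by
  let Q : H ⊗[k] H →ₐ[k] H ⊗[k] H :=
    Algebra.TensorProduct.productMap Algebra.TensorProduct.includeLeft (antipodeComul k H)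
  have hQ (t : H ⊗[k] H) : (maurerCartan k H).liftBaseChange H t =
      (KaehlerDifferential.D k H).tensorProductTo (Q t) := by
    induction t with
    | zero => simp
    | add x y hx hy => rw [map_add, hx, hy, map_add, map_add]
    | tmul a b =>
      rw [LinearMap.liftBaseChange_tmul, maurerCartan_apply, ← map_smul, Algebra.smul_def]
      rfl
  have hQh : Q (Coalgebra.comul h) = 1 ⊗ₜ h :=
    apply_comul_eq_one_tmul_of_convolution (f := .id) (g := HopfAlgebra.antipode k)
      (Q := Q.toLinearMap) HopfAlgebra.mul_antipode_lTensor_comul (fun _ _ => rfl) h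
  rw [hQ, hQh, Derivation.tensorProductTo_tmul, one_smul]

lemma tensorProductTo_antipodeComul {V : Type*} [AddCommGroup V] [Module k V] {φ : H →ₗ[k] V}
    {D : Derivation k H (H ⊗[k] V)} (hD : ∀ h, D h = φ.lTensor H (Coalgebra.comul h)) (h : H) :
    D.tensorProductTo (antipodeComul k H h) = 1 ⊗ₜ φ h := by
  let Q : H ⊗[k] H →ₐ[k] H ⊗[k] H :=
    Algebra.TensorProduct.productMap Algebra.TensorProduct.includeLeft (Bialgebra.comulAlgHom k H)
  have hQ (t : H ⊗[k] H) : D.tensorProductTo t = φ.lTensor H (Q t) := by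
    induction t with
    | zero => simp
    | add x y hx hy => rw [map_add, hx, hy, map_add, map_add]
    | tmul a b =>
      have hab : Q (a ⊗ₜ b) = a • Coalgebra.comul b := by simp [Q, Algebra.smul_def]
      rw [hab, D.tensorProductTo_tmul, hD]
      exact ((AlgebraTensorModule.lTensor H H φ).map_smul a _).symm
  have hQh : Q (antipodeComul k H h) = 1 ⊗ₜ h :=
    apply_comul_eq_one_tmul_of_convolution (f := HopfAlgebra.antipode k) (g := .id)
      (Q := Q.toLinearMap ∘ₗ (HopfAlgebra.antipode k).rTensor H)
      HopfAlgebra.mul_antipode_rTensor_comul (fun a b => by simp [Q]) h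
  rw [hQ, hQh, LinearMap.lTensor_tmul]

lemma liftKaehlerDifferential_tensorProductTo {k A M : Type*} [CommRing k] [CommRing A]
    [Algebra k A] [AddCommGroup M] [Module k M] [Module A M] [IsScalarTower k A M]
    (D : Derivation k A M) (t : A ⊗[k] A) :
    D.liftKaehlerDifferential ((KaehlerDifferential.D k A).tensorProductTo t) =
      D.tensorProductTo t := by
  induction t with
  | zero => simp
  | add x y hx hy => simp only [map_add, hx, hy]
  | tmul a b => simp [Derivation.tensorProductTo_tmul]

theorem bijective_liftBaseChange_range_maurerCartan :
    Function.Bijective ((LinearMap.range (maurerCartan k H)).subtype.liftBaseChange H) := by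
  let W := LinearMap.range (maurerCartan k H)
  let φ : H →ₗ[k] W := (maurerCartan k H).rangeRestrict
  obtain ⟨D, hD⟩ := exists_derivation_lTensor_comul φ fun a b => Subtype.ext (maurerCartan_mul a b)
  refine Function.bijective_iff_has_inverse.mpr ⟨D.liftKaehlerDifferential, ?_, ?_⟩
  · suffices D.liftKaehlerDifferential ∘ₗ W.subtype.liftBaseChange H = .id from
      LinearMap.congr_fun this
    ext ⟨_, h, rfl⟩
    change D.liftKaehlerDifferential ((1 : H) • maurerCartan k H h) = 1 ⊗ₜ φ h
    rw [one_smul, maurerCartan_apply, liftKaehlerDifferential_tensorProductTo,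
      tensorProductTo_antipodeComul hD]
  · suffices W.subtype.liftBaseChange H ∘ₗ D.liftKaehlerDifferential = .id from
      LinearMap.congr_fun this
    have hφ : W.subtype.liftBaseChange H ∘ₗ φ.baseChange H =
        (maurerCartan k H).liftBaseChange H := by
      ext; simp [φ]
    ext h
    change W.subtype.liftBaseChange H (D.liftKaehlerDifferential (KaehlerDifferential.D k H h)) =
      KaehlerDifferential.D k H h
    rw [D.liftKaehlerDifferential_comp_D, hD, ← liftBaseChange_maurerCartan_comul, ← hφ]
    rfl

theorem free_kaehlerDifferential_of_hopfAlgebra (k H : Type*) [Field k] [CommRing H]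
    [HopfAlgebra k H] : Module.Free H Ω[H⁄k] :=
  .of_equiv (.ofBijective _ (bijective_liftBaseChange_range_maurerCartan (k := k)))

end InvariantForms

theorem commutative_affine_hopf_algebra_regular_general
    (k : Type u') [Field k] [CharZero k]
    (H : Type u) [CommRing H] [HopfAlgebra k H]
    (haff : Algebra.FiniteType k H) :
    HasFiniteGlobalDimension H :=
  have := free_kaehlerDifferential_of_hopfAlgebra k H
  hasFiniteGlobalDimension_of_free_kaehlerDifferential k H

theorem commutative_affine_hopf_algebra_regular
    (k : Type u') [Field k] [IsAlgClosed k] [CharZero k]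
    (H : Type u) [CommRing H] [HopfAlgebra k H]
    (haff : Algebra.FiniteType k H) :
    HasFiniteGlobalDimension H :=
  commutative_affine_hopf_algebra_regular_general k H haff
end
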